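/- Let d ≥ 1, σ ∈ (0,1), 0 < λ ≤ Λ < ∞, and let 𝒜 be a nonempty index set. Assume: (a) for each β ∈ 𝒜, λ ≤ a_β(x,y) ≤ Λ, a_β is measurable in y, and |a_β(x,y) − a_β(x',y)| ≤ Λ ω_a(|x − x'|) for all x, x', y, where ω_a is a Dini function; (b) each f_β : B_1 → ℝ satisfies |f_β(x) − f_β(x')| ≤ ω_f(|x − x'|) for x, x' ∈ B_1 with ω_f a Dini function, and sup_{β∈𝒜} ‖f_β‖_{L_∞(B_1)} < ∞; (c) u : ℝ^d → ℝ is bounded, |u(x) − u(x')| ≤ ω_u(|x − x'|) for all x, x' ∈ ℝ^d with ω_u a Dini function, and [u]_{σ+ε;B_1} < ∞ for some ε ∈ (0, 1−σ); (d) u solves inf_{β∈𝒜}(L_β u + f_β) = 0 in B_1. Then there exists a constant C > 0 depending only on d, σ, λ, Λ, ω_a such that [u]_{σ;B_{1/2}} ≤ C‖u‖_{L_∞(ℝ^d)} + C sup_{β∈𝒜}‖f_β‖_{L_∞(B_1)} + C Σ_{j=1}^∞ (ω_u(2^{−j}) + ω_f(2^{−j})). Moreover, sup_{x_0 ∈ B_{1/2}}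 [u]_{σ;B_r(x_0)} → 0 as r → 0+. -/

import Mathlib

/-!
Fix `h` with `|h| ≤ r` and let `v = fwdDiff h u`. Near any given point there is a point `x` at which
`v` is at least as large and is touched from above, `v (x + y) ≤ v x + B y`, by a barrier `B` built
from truncated norms. Subtracting the equations at `x` and `x + h`, ellipticity bounds the integral
of the nonnegative function `G y = B y - (v (x + y) - v x)` against the kernel by the barrier, the
data and the oscillation of the coefficients. Averaging over a ball of radius `r` gives a point `y`
where `G y + G (y + h)` is small. Since `v (x + y) + v (x + y + h) = fwdDiff (h + h) u (x + y)`,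
twice the increment at scale `r` is at most the increment at scale `2 r` up to errors. For the
quotients `r ^ (-σ) * localModulus u ρ r` this is a contraction with factor `2 ^ σ / 2 < 1`.

Summed over the scales `2 ^ (-k)`, the errors become the Dini sums of `ωu` and `ωf`, small multiples
of the sum of quotients on a larger ball, and the multiple of `‖u‖_∞` from the finitely many large
scales; a standard iteration over radii absorbs the larger ball. The absorbed sum is finite because
`u` is Hölder continuous of an order above `σ`.
-/

open MeasureTheory Metric Filter Set
open scoped ENNReal Topology

noncomputable section

/-- Hölder seminorm `[u]_{γ;Ω}` (valued in `ℝ≥0∞`). -/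
def holderSemi {E F : Type*} [NormedAddCommGroup E] [NormedAddCommGroup F]
    (γ : ℝ) (Ω : Set E) (u : E → F) : ℝ≥0∞ :=
  ⨆ (x : E) (_ : x ∈ Ω) (y : E) (_ : y ∈ Ω) (_ : x ≠ y),
    ENNReal.ofReal (‖u x - u y‖ / ‖x - y‖ ^ γ)

/-- Zygmund seminorm `[u]_{Λ^α(Ω)}` (valued in `ℝ≥0∞`). -/
def zygmundSemi {E : Type*} [NormedAddCommGroup E] (α : ℝ) (Ω : Set E) (u : E → ℝ) : ℝ≥0∞ :=
  ⨆ (x : E) (h : E) (_ : h ≠ 0) (_ : x ∈ Ω) (_ : x + h ∈ Ω) (_ : x - h ∈ Ω),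
    ENNReal.ofReal (|u (x + h) + u (x - h) - 2 * u x| / ‖h‖ ^ α)

/-- The `L_∞` norm of `u` on `Ω` (valued in `ℝ≥0∞`). -/
def eSupNorm {E : Type*} (Ω : Set E) (u : E → ℝ) : ℝ≥0∞ :=
  ⨆ (x : E) (_ : x ∈ Ω), ENNReal.ofReal |u x|

/-- A Dini function: nonnegative, nondecreasing on `(0,∞)`, with `∫_0^1 ω(r)/r dr < ∞`. -/
def IsDini (ω : ℝ → ℝ) : Prop :=
  (∀ r, 0 < r → 0 ≤ ω r) ∧ MonotoneOn ω (Set.Ioi (0:ℝ)) ∧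
    IntegrableOn (fun r => ω r / r) (Set.Ioc (0:ℝ) 1)

section TruncNorm

variable {E : Type*} [NormedAddCommGroup E]

/-- The norm at scale `R`, truncated at `1`. It serves as a barrier. -/
def truncNorm (R : ℝ) (y : E) : ℝ := min (‖y‖ / R) 1

lemma truncNorm_zero (R : ℝ) : truncNorm R (0 : E) = 0 := by
  simp [truncNorm]

lemma truncNorm_nonneg {R : ℝ} (hR : 0 ≤ R) (y : E) : 0 ≤ truncNorm R y :=
  le_min (by positivity) zero_le_one

lemma truncNorm_eq_one {R : ℝ} {y : E} (hR : 0 < R) (hy : R ≤ ‖y‖) : truncNorm R y = 1 :=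
  min_eq_right ((one_le_div hR).2 hy)

lemma truncNorm_add_le {R : ℝ} (hR : 0 ≤ R) (x y : E) :
    truncNorm R (x + y) ≤ truncNorm R x + truncNorm R y := by
  have hx := truncNorm_nonneg hR x
  have hy := truncNorm_nonneg hR y
  have hxy : ‖x + y‖ / R ≤ ‖x‖ / R + ‖y‖ / R := by
    rw [← add_div]; gcongr; exact norm_add_le x y
  unfold truncNorm at *
  rcases min_cases (‖x‖ / R) 1 with hx' | hx' <;> rcases min_cases (‖y‖ / R) 1 with hy' | hy' <;>
    rcases min_cases (‖x + y‖ / R) 1 with hz | hz <;> linarith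

lemma continuous_truncNorm (R : ℝ) : Continuous (truncNorm R : E → ℝ) :=
  (continuous_norm.div_const R).min continuous_const

end TruncNorm

section Kernel

variable {E : Type*} [NormedAddCommGroup E] [NormedSpace ℝ E]

/-- The kernel `|y| ^ (-d - σ)` of the fractional Laplacian of order `σ`, where `d` is the
dimension of `E`. At `y = 0` its value is `0`, as long as `d + σ ≠ 0`. -/
def fracKernel (σ : ℝ) (y : E) : ℝ := ‖y‖ ^ (-(Module.finrank ℝ E : ℝ) - σ)

lemma fracKernel_nonneg (σ : ℝ) (y : E) : 0 ≤ fracKernel σ y :=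
  Real.rpow_nonneg (norm_nonneg y) _

lemma fracKernel_pos (σ : ℝ) {y : E} (hy : y ≠ 0) : 0 < fracKernel σ y :=
  Real.rpow_pos_of_pos (norm_pos_iff.2 hy) _

lemma fracKernel_smul (σ : ℝ) {c : ℝ} (hc : 0 < c) (y : E) :
    fracKernel σ (c • y) = c ^ (-(Module.finrank ℝ E : ℝ) - σ) * fracKernel σ y := by
  rw [fracKernel, norm_smul, Real.norm_of_nonneg hc.le, Real.mul_rpow hc.le (norm_nonneg y),
    fracKernel]

lemma one_le_rpow_mul_fracKernel {σ R : ℝ} {y : E} (hσ : 0 < σ) (hy : y ≠ 0) (hyR : ‖y‖ ≤ R) :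
    1 ≤ R ^ ((Module.finrank ℝ E : ℝ) + σ) * fracKernel σ y := by
  have hy' : 0 < ‖y‖ := norm_pos_iff.2 hy
  rw [fracKernel, ← neg_add', Real.rpow_neg hy'.le, ← div_eq_mul_inv, one_le_div (by positivity)]
  gcongr

lemma truncNorm_eq_truncNorm_one_smul {R : ℝ} (hR : 0 ≤ R) (y : E) :
    truncNorm R y = truncNorm 1 (R⁻¹ • y) := by
  rw [truncNorm, truncNorm, norm_smul, Real.norm_of_nonneg (inv_nonneg.2 hR), div_one,
    inv_mul_eq_div]

lemma truncNorm_mul_fracKernel_eq (σ : ℝ) {R : ℝ} (hR : 0 < R) (y : E) :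
    truncNorm R y * fracKernel σ y = R ^ (-(Module.finrank ℝ E : ℝ) - σ) *
      (truncNorm 1 (R⁻¹ • y) * fracKernel σ (R⁻¹ • y)) := by
  rw [truncNorm_eq_truncNorm_one_smul hR.le, fracKernel_smul σ (inv_pos.2 hR), mul_left_comm,
    Real.inv_rpow hR.le, mul_inv_cancel_left₀ (Real.rpow_pos_of_pos hR _).ne']

variable [MeasurableSpace E] (μ : Measure E)

/-- The integral of the unit barrier `truncNorm 1` against `fracKernel σ`. -/
def kernelMass (σ : ℝ) : ℝ := ∫ y, truncNorm 1 y * fracKernel σ y ∂μ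

lemma kernelMass_nonneg (σ : ℝ) : 0 ≤ kernelMass μ σ :=
  integral_nonneg fun y => mul_nonneg (truncNorm_nonneg zero_le_one y) (fracKernel_nonneg σ y)

variable [BorelSpace E]

lemma measurable_fracKernel (σ : ℝ) : Measurable (fracKernel σ : E → ℝ) :=
  measurable_norm.pow_const _

variable [FiniteDimensional ℝ E] [μ.IsAddHaarMeasure]

lemma integrable_truncNorm_one_mul_fracKernel [Nontrivial E] {σ : ℝ} (hσ : σ ∈ Ioo (0 : ℝ) 1) :
    Integrable (fun y => truncNorm 1 y * fracKernel σ y) μ := by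
  have hpow (t : ℝ) (ht : 0 < t) : t ^ (Module.finrank ℝ E - 1) *
      t ^ (-(Module.finrank ℝ E : ℝ) - σ) = t ^ (-1 - σ) := by
    rw [← Real.rpow_natCast, ← Real.rpow_add ht, Nat.cast_sub Module.finrank_pos]
    congr 1; push_cast; ring
  have hsmall : IntegrableOn (fun t : ℝ => t ^ (-σ)) (Ioc 0 1) := by
    rw [← intervalIntegrable_iff_integrableOn_Ioc_of_le zero_le_one]
    exact intervalIntegral.intervalIntegrable_rpow' (by linarith [hσ.2])
  have hlarge : IntegrableOn (fun t : ℝ => t ^ (-1 - σ)) (Ioi 1) :=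
    integrableOn_Ioi_rpow_of_lt (by linarith [hσ.1]) one_pos
  refine (integrable_fun_norm_addHaar μ
    (f := fun t => min (t / 1) 1 * t ^ (-(Module.finrank ℝ E : ℝ) - σ))).2 ?_
  rw [← Ioc_union_Ioi_eq_Ioi zero_le_one, integrableOn_union]
  refine ⟨hsmall.congr_fun (fun t ht => ?_) measurableSet_Ioc,
    hlarge.congr_fun (fun t (ht : 1 < t) => ?_) measurableSet_Ioi⟩
  · have hexp : t ^ (-σ) = t * t ^ (-1 - σ) := by
      rw [← Real.rpow_one_add' ht.1.le (by linarith [hσ.1])]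
      congr 1; ring
    simp only [div_one, smul_eq_mul, min_eq_left ht.2]
    rw [mul_left_comm, hpow t ht.1, hexp]
  · simp only [div_one, smul_eq_mul, min_eq_right ht.le, one_mul, hpow t (one_pos.trans ht)]

lemma integrable_truncNorm_mul_fracKernel [Nontrivial E] {σ R : ℝ} (hσ : σ ∈ Ioo (0 : ℝ) 1)
    (hR : 0 < R) : Integrable (fun y => truncNorm R y * fracKernel σ y) μ := by
  simp_rw [truncNorm_mul_fracKernel_eq σ hR]
  exact ((integrable_comp_smul_iff μ (fun y => truncNorm 1 y * fracKernel σ y)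
    (inv_ne_zero hR.ne')).2 (integrable_truncNorm_one_mul_fracKernel μ hσ)).const_mul _

lemma integral_truncNorm_mul_fracKernel (σ : ℝ) {R : ℝ} (hR : 0 < R) :
    ∫ y, truncNorm R y * fracKernel σ y ∂μ = kernelMass μ σ * R ^ (-σ) := by
  have hexp : R ^ (-(Module.finrank ℝ E : ℝ) - σ) * R ^ Module.finrank ℝ E = R ^ (-σ) := by
    rw [← Real.rpow_natCast, ← Real.rpow_add hR]
    congr 1; ring
  simp_rw [truncNorm_mul_fracKernel_eq σ hR]
  rw [integral_const_mul,
    Measure.integral_comp_inv_smul μ (fun y => truncNorm 1 y * fracKernel σ y) R, smul_eq_mul,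
    abs_of_pos (pow_pos hR _), ← mul_assoc, hexp, mul_comm, kernelMass]

end Kernel

section Averaging

variable {E : Type*} [NormedAddCommGroup E] [NormedSpace ℝ E] [FiniteDimensional ℝ E]
  [MeasurableSpace E] (μ : Measure E) [μ.IsAddHaarMeasure]

lemma measureReal_ball_pos {r : ℝ} (hr : 0 < r) : 0 < μ.real (ball 0 r) :=
  ENNReal.toReal_pos (measure_ball_pos μ 0 hr).ne' measure_ball_lt_top.ne

/-- The constant in the averaging estimate `exists_mem_ball_add_translate_le`. -/
def averagingConst (σ : ℝ) : ℝ :=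
  2 * 2 ^ ((Module.finrank ℝ E : ℝ) + σ) / μ.real (ball 0 1)

lemma averagingConst_pos (σ : ℝ) : 0 < averagingConst μ σ := by
  have := measureReal_ball_pos μ one_pos
  unfold averagingConst
  positivity

variable [BorelSpace E]

lemma exists_mem_ball_add_translate_mul_le {G : E → ℝ} {r : ℝ} {h : E} (hG : ∀ y, 0 ≤ G y)
    (hint : IntegrableOn G (ball 0 (2 * r)) μ) (hr : 0 < r) (hh : ‖h‖ ≤ r) :
    ∃ y ∈ ball (0 : E) r,
      (G y + G (y + h)) * μ.real (ball 0 r) ≤ 2 * ∫ y in ball 0 (2 * r), G y ∂μ := by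
  have hsub : ball (0 : E) r ⊆ ball 0 (2 * r) := ball_subset_ball (by linarith)
  have hsub' : ball h r ⊆ ball (0 : E) (2 * r) :=
    ball_subset_ball' (by rw [dist_zero_right]; linarith)
  have hpre : (fun y : E => y + h) ⁻¹' ball h r = ball 0 r := by
    ext y; simp [dist_eq_norm]
  have htrans := measurePreserving_add_right μ h
  have hemb : MeasurableEmbedding (fun y : E => y + h) :=
    (Homeomorph.addRight h).measurableEmbedding
  have hint' : IntegrableOn (fun y => G (y + h)) (ball 0 r) μ := by
    rw [← hpre]
    exact (htrans.integrableOn_comp_preimage hemb).2 (hint.mono_set hsub')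
  have hmono {s : Set E} (hs : s ⊆ ball 0 (2 * r)) :
      ∫ y in s, G y ∂μ ≤ ∫ y in ball 0 (2 * r), G y ∂μ :=
    setIntegral_mono_set hint (ae_of_all _ hG) hs.eventuallyLE
  have htranslate : ∫ y in ball 0 r, G (y + h) ∂μ = ∫ y in ball h r, G y ∂μ := by
    rw [← hpre, htrans.setIntegral_preimage_emb hemb]
  obtain ⟨y, hy, hle⟩ := exists_le_setAverage (measure_ball_pos μ 0 hr).ne'
    measure_ball_lt_top.ne ((hint.mono_set hsub).add hint')
  refine ⟨y, hy, ?_⟩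
  rw [setAverage_eq, smul_eq_mul, ← div_eq_inv_mul, le_div_iff₀ (measureReal_ball_pos μ hr)] at hle
  refine hle.trans ?_
  simp only [Pi.add_apply]
  rw [integral_add (hint.mono_set hsub) hint', htranslate, two_mul]
  exact add_le_add (hmono hsub) (hmono hsub')

variable [Nontrivial E]

lemma ae_le_rpow_mul_mul_fracKernel {G : E → ℝ} {σ R : ℝ} (hσ : 0 < σ) (hG : ∀ y, 0 ≤ G y) :
    ∀ᵐ y ∂μ.restrict (ball 0 R),
      G y ≤ R ^ ((Module.finrank ℝ E : ℝ) + σ) * (G y * fracKernel σ y) := by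
  filter_upwards [ae_restrict_mem measurableSet_ball, ae_restrict_of_ae (Measure.ae_ne μ 0)]
    with y hy hy0
  rw [mul_left_comm]
  exact le_mul_of_one_le_right (hG y)
    (one_le_rpow_mul_fracKernel hσ hy0 (mem_ball_zero_iff.1 hy).le)

lemma aestronglyMeasurable_of_mul_fracKernel {G : E → ℝ} {σ : ℝ}
    (hint : AEStronglyMeasurable (fun y => G y * fracKernel σ y) μ) :
    AEStronglyMeasurable G μ := by
  refine (hint.mul (measurable_fracKernel σ).inv.aestronglyMeasurable).congr ?_
  filter_upwards [Measure.ae_ne μ 0] with y hy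
  exact mul_inv_cancel_right₀ (fracKernel_pos σ hy).ne' (G y)

lemma integrableOn_ball_of_mul_fracKernel {G : E → ℝ} {σ : ℝ} (R : ℝ) (hσ : 0 < σ)
    (hG : ∀ y, 0 ≤ G y) (hint : Integrable (fun y => G y * fracKernel σ y) μ) :
    IntegrableOn G (ball 0 R) μ := by
  refine (hint.const_mul (R ^ ((Module.finrank ℝ E : ℝ) + σ))).integrableOn.mono'
    (aestronglyMeasurable_of_mul_fracKernel μ hint.aestronglyMeasurable).restrict ?_
  filter_upwards [ae_le_rpow_mul_mul_fracKernel μ hσ hG] with y hy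
  rwa [Real.norm_of_nonneg (hG y)]

lemma setIntegral_ball_le_integral_mul_fracKernel {G : E → ℝ} {σ R : ℝ} (hσ : 0 < σ) (hR : 0 ≤ R)
    (hG : ∀ y, 0 ≤ G y) (hint : Integrable (fun y => G y * fracKernel σ y) μ) :
    ∫ y in ball 0 R, G y ∂μ ≤
      R ^ ((Module.finrank ℝ E : ℝ) + σ) * ∫ y, G y * fracKernel σ y ∂μ := by
  have hint' := hint.const_mul (R ^ ((Module.finrank ℝ E : ℝ) + σ))
  rw [← integral_const_mul]
  exact (integral_mono_ae (integrableOn_ball_of_mul_fracKernel μ R hσ hG hint) hint'.integrableOn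
    (ae_le_rpow_mul_mul_fracKernel μ hσ hG)).trans (setIntegral_le_integral hint' (ae_of_all _
      fun y => mul_nonneg (by positivity) (mul_nonneg (hG y) (fracKernel_nonneg σ y))))

lemma exists_mem_ball_add_translate_le {G : E → ℝ} {σ r : ℝ} {h : E} (hσ : 0 < σ)
    (hG : ∀ y, 0 ≤ G y) (hint : Integrable (fun y => G y * fracKernel σ y) μ) (hr : 0 < r)
    (hh : ‖h‖ ≤ r) : ∃ y ∈ ball (0 : E) r,
      G y + G (y + h) ≤ averagingConst μ σ * r ^ σ * ∫ y, G y * fracKernel σ y ∂μ := by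
  obtain ⟨y, hy, hle⟩ := exists_mem_ball_add_translate_mul_le μ hG
    (integrableOn_ball_of_mul_fracKernel μ (2 * r) hσ hG hint) hr hh
  refine ⟨y, hy, ?_⟩
  have hball : μ.real (ball 0 r) = r ^ Module.finrank ℝ E * μ.real (ball 0 1) := by
    rw [measureReal_def, Measure.addHaar_ball μ _ hr.le, ENNReal.toReal_mul,
      ENNReal.toReal_ofReal (by positivity), measureReal_def]
  have hunit := measureReal_ball_pos μ one_pos
  have hexp : (2 * r) ^ ((Module.finrank ℝ E : ℝ) + σ) =
      2 ^ ((Module.finrank ℝ E : ℝ) + σ) * (r ^ Module.finrank ℝ E * r ^ σ) := by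
    rw [Real.mul_rpow two_pos.le hr.le, Real.rpow_add hr, Real.rpow_natCast]
  have hmass := setIntegral_ball_le_integral_mul_fracKernel μ hσ (by positivity : 0 ≤ 2 * r) hG hint
  rw [hexp] at hmass
  refine le_of_mul_le_mul_right ?_ (by rw [hball]; positivity : 0 < μ.real (ball 0 r))
  calc (G y + G (y + h)) * μ.real (ball 0 r)
      ≤ 2 * (2 ^ ((Module.finrank ℝ E : ℝ) + σ) * (r ^ Module.finrank ℝ E * r ^ σ) *
          ∫ y, G y * fracKernel σ y ∂μ) := by linarith
    _ = averagingConst μ σ * r ^ σ * (∫ y, G y * fracKernel σ y ∂μ) * μ.real (ball 0 r) := by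
      rw [hball, averagingConst]; field_simp

end Averaging

section LocalModulus

variable {E : Type*} [NormedAddCommGroup E] {u : E → ℝ} {M σ ρ ρ' r : ℝ}

/-- The modulus of continuity of `u` at scale `r`, measured from points of the ball of radius `ρ`.
The set under the supremum is bounded as soon as `u` is. -/
def localModulus (u : E → ℝ) (ρ r : ℝ) : ℝ :=
  sSup {t | ∃ x h : E, ‖x‖ < ρ ∧ ‖h‖ ≤ r ∧ |fwdDiff h u x| = t}

lemma abs_fwdDiff_le_two_mul (hM : ∀ x, |u x| ≤ M) (h x : E) : |fwdDiff h u x| ≤ 2 * M := by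
  rw [two_mul]
  exact (abs_sub _ _).trans (add_le_add (hM _) (hM _))

lemma localModulus_nonneg (u : E → ℝ) (ρ r : ℝ) : 0 ≤ localModulus u ρ r :=
  Real.sSup_nonneg fun _ ⟨_, _, _, _, ht⟩ => ht ▸ abs_nonneg _

lemma abs_fwdDiff_le_localModulus (hM : ∀ x, |u x| ≤ M) {x h : E} (hx : ‖x‖ < ρ) (hh : ‖h‖ ≤ r) :
    |fwdDiff h u x| ≤ localModulus u ρ r :=
  le_csSup ⟨2 * M, fun _ ⟨_, _, _, _, ht⟩ => ht ▸ abs_fwdDiff_le_two_mul hM _ _⟩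
    ⟨x, h, hx, hh, rfl⟩

lemma localModulus_le {c : ℝ} (hc : 0 ≤ c)
    (h : ∀ x h : E, ‖x‖ < ρ → ‖h‖ ≤ r → |fwdDiff h u x| ≤ c) : localModulus u ρ r ≤ c :=
  Real.sSup_le (fun _ ⟨x, y, hx, hy, ht⟩ => ht ▸ h x y hx hy) hc

lemma localModulus_le_of_fwdDiff_le {c : ℝ} (hc : 0 ≤ c)
    (h : ∀ x h : E, ‖x‖ < ρ + r → ‖h‖ ≤ r → h ≠ 0 → fwdDiff h u x ≤ c) :
    localModulus u ρ r ≤ c := by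
  refine localModulus_le hc fun x y hx hy => ?_
  rcases eq_or_ne y 0 with rfl | hy0
  · simpa [fwdDiff] using hc
  · refine abs_le.2 ⟨?_, h x y (by linarith [norm_nonneg y]) hy hy0⟩
    have hback := h (x + y) (-y) (by linarith [norm_add_le x y]) (by rwa [norm_neg])
      (neg_ne_zero.2 hy0)
    rw [fwdDiff, add_neg_cancel_right] at hback
    rw [fwdDiff]
    linarith

lemma localModulus_le_two_mul (hM : ∀ x, |u x| ≤ M) (ρ r : ℝ) : localModulus u ρ r ≤ 2 * M :=
  localModulus_le (by linarith [(abs_nonneg (u 0)).trans (hM 0)])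
    fun _ _ _ _ => abs_fwdDiff_le_two_mul hM _ _

lemma localModulus_mono_left (hM : ∀ x, |u x| ≤ M) (h : ρ ≤ ρ') (r : ℝ) :
    localModulus u ρ r ≤ localModulus u ρ' r :=
  localModulus_le (localModulus_nonneg u ρ' r) fun _ _ hx hh =>
    abs_fwdDiff_le_localModulus hM (hx.trans_le h) hh

/-- The modulus of continuity at scale `r`, normalized so as to bound the `σ`-Hölder seminorm. -/
def holderQuotient (σ : ℝ) (u : E → ℝ) (ρ r : ℝ) : ℝ := r ^ (-σ) * localModulus u ρ r

/-- The sum of the Hölder quotients of `u` over all dyadic scales `2 ^ (-k)`, `k ≥ 0`. Since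
`tsum` has junk values, it is meaningful only together with summability. -/
def dyadicSum (σ : ℝ) (u : E → ℝ) (ρ : ℝ) : ℝ := ∑' k : ℕ, holderQuotient σ u ρ ((1 / 2) ^ k)

lemma holderQuotient_nonneg (hr : 0 ≤ r) : 0 ≤ holderQuotient σ u ρ r :=
  mul_nonneg (Real.rpow_nonneg hr _) (localModulus_nonneg u ρ r)

lemma holderQuotient_mono_left (hM : ∀ x, |u x| ≤ M) (h : ρ ≤ ρ') (hr : 0 ≤ r) :
    holderQuotient σ u ρ r ≤ holderQuotient σ u ρ' r :=
  mul_le_mul_of_nonneg_left (localModulus_mono_left hM h r) (Real.rpow_nonneg hr _)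

lemma localModulus_eq_rpow_mul_holderQuotient (hr : 0 < r) :
    localModulus u ρ r = r ^ σ * holderQuotient σ u ρ r := by
  rw [holderQuotient, ← mul_assoc, ← Real.rpow_add hr, add_neg_cancel, Real.rpow_zero, one_mul]

lemma dyadicSum_nonneg : 0 ≤ dyadicSum σ u ρ :=
  tsum_nonneg fun _ => holderQuotient_nonneg (by positivity)

lemma half_pow_rpow_neg (σ : ℝ) (k : ℕ) : (((1 : ℝ) / 2) ^ k) ^ (-σ) = ((2 : ℝ) ^ σ) ^ k := by
  rw [one_div, inv_pow, Real.inv_rpow (by positivity), Real.rpow_neg (by positivity), inv_inv,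
    ← Real.rpow_natCast, ← Real.rpow_natCast, ← Real.rpow_mul two_pos.le,
    ← Real.rpow_mul two_pos.le, mul_comm]

end LocalModulus

section NonlocalVariation

variable {E : Type*} [NormedAddCommGroup E] [NormedSpace ℝ E] {σ ρ M : ℝ}

lemma ofReal_mul_fracKernel_le_tsum_add {g : E → ℝ} {b : ℕ → ℝ} {B : ℝ} {y : E} (hy : y ≠ 0)
    (hb : ∀ k, ‖y‖ ≤ (1 / 2) ^ k → g y ≤ b k) (hB : g y ≤ B) :
    ENNReal.ofReal (g y * fracKernel σ y) ≤
      ∑' k, ENNReal.ofReal (b k * (truncNorm ((1 / 2) ^ (k + 1)) y * fracKernel σ y)) +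
        ENNReal.ofReal (B * (truncNorm 1 y * fracKernel σ y)) := by
  have hker := fracKernel_nonneg σ y
  rcases le_or_gt ‖y‖ 1 with hy1 | hy1
  · obtain ⟨k, hk, hk'⟩ := exists_nat_pow_near_of_lt_one (norm_pos_iff.2 hy) hy1
      (one_half_pos (α := ℝ)) one_half_lt_one
    refine le_trans ?_ ((ENNReal.le_tsum k).trans le_self_add)
    rw [truncNorm_eq_one (by positivity) hk.le, one_mul]
    gcongr
    exact hb k hk'
  · refine le_trans ?_ le_add_self
    rw [truncNorm_eq_one one_pos hy1.le, one_mul]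
    gcongr

variable [MeasurableSpace E] (μ : Measure E)

/-- The total variation of `u` about `x` seen by the kernel of order `σ`, i.e. the integral of
`|δu(x, y)| |y| ^ (-d - σ)` in `y`. -/
def nonlocalVariation (σ : ℝ) (u : E → ℝ) (x : E) : ℝ :=
  ∫ y, |u (x + y) - u x| * fracKernel σ y ∂μ

lemma nonlocalVariation_nonneg (σ : ℝ) (u : E → ℝ) (x : E) : 0 ≤ nonlocalVariation μ σ u x :=
  integral_nonneg fun y => mul_nonneg (abs_nonneg _) (fracKernel_nonneg σ y)

variable [BorelSpace E] [FiniteDimensional ℝ E] [Nontrivial E] [μ.IsAddHaarMeasure]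

lemma lintegral_ofReal_mul_truncNorm_mul_fracKernel {c R : ℝ} (hσ : σ ∈ Ioo (0 : ℝ) 1)
    (hc : 0 ≤ c) (hR : 0 < R) :
    ∫⁻ y, ENNReal.ofReal (c * (truncNorm R y * fracKernel σ y)) ∂μ =
      ENNReal.ofReal (c * (kernelMass μ σ * R ^ (-σ))) := by
  rw [← ofReal_integral_eq_lintegral_ofReal
    ((integrable_truncNorm_mul_fracKernel μ hσ hR).const_mul c) (ae_of_all _ fun y =>
      mul_nonneg hc (mul_nonneg (truncNorm_nonneg hR.le y) (fracKernel_nonneg σ y))),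
    integral_const_mul, integral_truncNorm_mul_fracKernel μ σ hR]

lemma integral_mul_fracKernel_le_tsum {g : E → ℝ} {b : ℕ → ℝ} {B : ℝ} (hσ : σ ∈ Ioo (0 : ℝ) 1)
    (hg : ∀ y, 0 ≤ g y) (hb0 : ∀ k, 0 ≤ b k)
    (hsum : Summable fun k : ℕ => (((1 : ℝ) / 2) ^ k) ^ (-σ) * b k)
    (hb : ∀ k y, ‖y‖ ≤ (1 / 2) ^ k → g y ≤ b k) (hB : ∀ y, g y ≤ B) :
    ∫ y, g y * fracKernel σ y ∂μ ≤
      kernelMass μ σ * (2 ^ σ * ∑' k : ℕ, (((1 : ℝ) / 2) ^ k) ^ (-σ) * b k + B) := by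
  have hB0 : 0 ≤ B := (hg 0).trans (hB 0)
  have hmass := kernelMass_nonneg μ σ
  have hterm (k : ℕ) : b k * (kernelMass μ σ * ((1 / 2) ^ (k + 1)) ^ (-σ)) =
      kernelMass μ σ * 2 ^ σ * (((1 / 2) ^ k) ^ (-σ) * b k) := by
    rw [half_pow_rpow_neg, half_pow_rpow_neg, pow_succ]; ring
  have hmeas {c R : ℝ} : AEMeasurable (fun y : E =>
      ENNReal.ofReal (c * (truncNorm R y * fracKernel σ y))) μ :=
    (((continuous_truncNorm R).measurable.mul
      (measurable_fracKernel σ)).const_mul c).ennreal_ofReal.aemeasurable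
  have hsum0 : 0 ≤ ∑' k : ℕ, (((1 : ℝ) / 2) ^ k) ^ (-σ) * b k :=
    tsum_nonneg fun k => mul_nonneg (by positivity) (hb0 k)
  refine (ENNReal.ofReal_le_ofReal_iff (by positivity)).1 ?_
  calc ENNReal.ofReal (∫ y, g y * fracKernel σ y ∂μ)
      ≤ ‖∫ y, g y * fracKernel σ y ∂μ‖ₑ := Real.ofReal_le_enorm _
    _ ≤ ∫⁻ y, ENNReal.ofReal (g y * fracKernel σ y) ∂μ :=
      (enorm_integral_le_lintegral_enorm _).trans_eq <| lintegral_congr fun y =>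
        Real.enorm_of_nonneg (mul_nonneg (hg y) (fracKernel_nonneg σ y))
    _ ≤ ∫⁻ y, ∑' k, ENNReal.ofReal (b k * (truncNorm ((1 / 2) ^ (k + 1)) y * fracKernel σ y)) +
          ENNReal.ofReal (B * (truncNorm 1 y * fracKernel σ y)) ∂μ :=
      lintegral_mono_ae <| (Measure.ae_ne μ 0).mono fun y hy =>
        ofReal_mul_fracKernel_le_tsum_add hy (hb · y) (hB y)
    _ = ENNReal.ofReal
          (kernelMass μ σ * (2 ^ σ * ∑' k : ℕ, (((1 : ℝ) / 2) ^ k) ^ (-σ) * b k + B)) := by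
      rw [lintegral_add_right' _ hmeas, lintegral_tsum fun k => hmeas,
        lintegral_ofReal_mul_truncNorm_mul_fracKernel μ hσ hB0 one_pos, Real.one_rpow, mul_one,
        tsum_congr fun k => (lintegral_ofReal_mul_truncNorm_mul_fracKernel μ hσ (hb0 k)
          (by positivity)).trans (congrArg ENNReal.ofReal (hterm k)),
        ← ENNReal.ofReal_tsum_of_nonneg (fun k => by have := hb0 k; positivity)
          (hsum.mul_left _), tsum_mul_left, ← ENNReal.ofReal_add (by positivity) (by positivity)]
      congr 1; ring

lemma nonlocalVariation_le {u : E → ℝ} {x : E} (hσ : σ ∈ Ioo (0 : ℝ) 1) (hM : ∀ x, |u x| ≤ M)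
    (hsum : Summable fun k : ℕ => holderQuotient σ u ρ ((1 / 2) ^ k)) (hx : ‖x‖ < ρ) :
    nonlocalVariation μ σ u x ≤ kernelMass μ σ * (2 ^ σ * dyadicSum σ u ρ + 2 * M) :=
  integral_mul_fracKernel_le_tsum μ hσ (fun _ => abs_nonneg _) (fun _ => localModulus_nonneg u ρ _)
    hsum (fun _ y hy => by
      simpa only [fwdDiff] using abs_fwdDiff_le_localModulus (h := y) hM hx hy)
    fun y => abs_fwdDiff_le_two_mul hM y x

end NonlocalVariation

section Barrier

variable {E : Type*} [NormedAddCommGroup E] {c c' R R' : ℝ}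

/-- The barrier used to touch an increment of the solution from above: a truncated norm at scale
`R`, which controls the increment near the touching point, plus one at scale `R'`, which controls
it far away. -/
def barrier (c R c' R' : ℝ) (y : E) : ℝ := c * truncNorm R y + c' * truncNorm R' y

lemma barrier_nonneg (hc : 0 ≤ c) (hR : 0 ≤ R) (hc' : 0 ≤ c') (hR' : 0 ≤ R') (y : E) :
    0 ≤ barrier c R c' R' y :=
  add_nonneg (mul_nonneg hc (truncNorm_nonneg hR y)) (mul_nonneg hc' (truncNorm_nonneg hR' y))

lemma exists_mem_closedBall_sub_le_truncNorm [ProperSpace E] {w : E → ℝ} {s : Set E} {D : ℝ}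
    {x₀ : E} (hR : 0 < R) (hw : ContinuousOn w (closedBall x₀ R)) (hx₀ : x₀ ∈ s)
    (hD : ∀ z ∈ s, |w z| ≤ D) :
    ∃ x ∈ closedBall x₀ R, w x₀ ≤ w x ∧
      ∀ y, x + y ∈ s → w (x + y) - w x ≤ 2 * D * truncNorm R y := by
  have hD0 : 0 ≤ D := (abs_nonneg _).trans (hD x₀ hx₀)
  have hcone : Continuous fun z => 2 * D * truncNorm R (z - x₀) :=
    continuous_const.mul ((continuous_truncNorm R).comp (continuous_id.sub continuous_const))
  -- Adding the cone costs nothing at `x₀` and dominates the oscillation of `w` outside the ball.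
  obtain ⟨x, hx, hmax⟩ := (isCompact_closedBall x₀ R).exists_isMaxOn
    ⟨x₀, mem_closedBall_self hR.le⟩ (hw.sub hcone.continuousOn)
  have hpen : 0 ≤ 2 * D * truncNorm R (x - x₀) := by
    have := truncNorm_nonneg hR.le (x - x₀)
    positivity
  have hx₀x : w x₀ ≤ w x - 2 * D * truncNorm R (x - x₀) := by
    simpa [truncNorm_zero] using hmax (mem_closedBall_self hR.le)
  refine ⟨x, hx, by linarith, fun y hy => ?_⟩
  have hmax_s : w (x + y) - 2 * D * truncNorm R (x + y - x₀) ≤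
      w x - 2 * D * truncNorm R (x - x₀) := by
    by_cases hball : x + y ∈ closedBall x₀ R
    · exact hmax hball
    · rw [mem_closedBall, dist_eq_norm, not_le] at hball
      rw [truncNorm_eq_one hR hball.le]
      linarith [(abs_le.1 (hD _ hy)).2, (abs_le.1 (hD _ hx₀)).1]
  have hsub := mul_le_mul_of_nonneg_left (truncNorm_add_le hR.le (x - x₀) y)
    (mul_nonneg zero_le_two hD0)
  rw [sub_add_eq_add_sub] at hsub
  linarith

lemma exists_mem_closedBall_sub_le_barrier [ProperSpace E] {w : E → ℝ} {D U ρ δ : ℝ} {x₀ : E}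
    (hR : 0 < R) (hδ : 0 < δ) (hρ : ‖x₀‖ + R + δ ≤ ρ) (hw : ContinuousOn w (closedBall x₀ R))
    (hD : ∀ z ∈ ball 0 ρ, |w z| ≤ D) (hU : ∀ z, |w z| ≤ U) :
    ∃ x ∈ closedBall x₀ R, w x₀ ≤ w x ∧ ∀ y, w (x + y) - w x ≤ barrier (2 * D) R (2 * U) δ y := by
  have hx₀ : x₀ ∈ ball 0 ρ := mem_ball_zero_iff.2 (by linarith)
  have hD0 : 0 ≤ D := (abs_nonneg _).trans (hD x₀ hx₀)
  have hU0 : 0 ≤ U := (abs_nonneg _).trans (hU x₀)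
  obtain ⟨x, hx, hle, htouch⟩ := exists_mem_closedBall_sub_le_truncNorm hR hw hx₀ hD
  refine ⟨x, hx, hle, fun y => ?_⟩
  by_cases hy : x + y ∈ ball 0 ρ
  · exact (htouch y hy).trans (le_add_of_nonneg_right
      (mul_nonneg (by positivity) (truncNorm_nonneg hδ.le y)))
  · have hfar : δ ≤ ‖y‖ := by
      rw [mem_ball_zero_iff, not_lt] at hy
      linarith [norm_add_le x y, norm_le_of_mem_closedBall hx]
    rw [barrier, truncNorm_eq_one hδ hfar, mul_one]
    refine le_add_of_nonneg_of_le (mul_nonneg (by positivity) (truncNorm_nonneg hR.le y)) ?_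
    linarith [(abs_le.1 (hU (x + y))).2, (abs_le.1 (hU x)).1]

variable [NormedSpace ℝ E] [FiniteDimensional ℝ E] [Nontrivial E] [MeasurableSpace E] [BorelSpace E]
  (μ : Measure E) [μ.IsAddHaarMeasure] {σ : ℝ}

lemma integrable_barrier_mul_fracKernel (c c' : ℝ) (hσ : σ ∈ Ioo (0 : ℝ) 1) (hR : 0 < R)
    (hR' : 0 < R') : Integrable (fun y => barrier c R c' R' y * fracKernel σ y) μ := by
  simp only [barrier, add_mul, mul_assoc]
  exact ((integrable_truncNorm_mul_fracKernel μ hσ hR).const_mul c).add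
    ((integrable_truncNorm_mul_fracKernel μ hσ hR').const_mul c')

lemma integral_barrier_mul_fracKernel (c c' : ℝ) (hσ : σ ∈ Ioo (0 : ℝ) 1) (hR : 0 < R)
    (hR' : 0 < R') : ∫ y, barrier c R c' R' y * fracKernel σ y ∂μ =
      kernelMass μ σ * (c * R ^ (-σ) + c' * R' ^ (-σ)) := by
  simp only [barrier, add_mul, mul_assoc]
  rw [integral_add ((integrable_truncNorm_mul_fracKernel μ hσ hR).const_mul c)
      ((integrable_truncNorm_mul_fracKernel μ hσ hR').const_mul c'), integral_const_mul,
    integral_const_mul, integral_truncNorm_mul_fracKernel μ σ hR,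
    integral_truncNorm_mul_fracKernel μ σ hR']
  ring

end Barrier

section Ellipticity

variable {E : Type*} [NormedAddCommGroup E] [NormedSpace ℝ E] [MeasurableSpace E] {μ : Measure E}
  {σ lam Lam : ℝ} {α g B : E → ℝ}

lemma integrable_mul_mul_fracKernel (hlam : 0 ≤ lam) (hα : ∀ y, α y ∈ Icc lam Lam)
    (hαm : Measurable α) (hg : Integrable (fun y => g y * fracKernel σ y) μ) :
    Integrable (fun y => g y * α y * fracKernel σ y) μ := by
  refine (hg.bdd_mul hαm.aestronglyMeasurable (ae_of_all _ fun y => ?_) (c := Lam)).congr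
    (ae_of_all _ fun y => ?_)
  · rw [Real.norm_of_nonneg (hlam.trans (hα y).1)]
    exact (hα y).2
  · exact (mul_assoc _ _ _).symm.trans (congrArg (· * fracKernel σ y) (mul_comm _ _))

lemma integrable_mul_fracKernel_of_mul_mul (hlam : 0 < lam) (hα : ∀ y, α y ∈ Icc lam Lam)
    (hαm : Measurable α) (hg : Integrable (fun y => g y * α y * fracKernel σ y) μ) :
    Integrable (fun y => g y * fracKernel σ y) μ := by
  refine (hg.bdd_mul hαm.inv.aestronglyMeasurable (ae_of_all _ fun y => ?_) (c := lam⁻¹)).congr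
    (ae_of_all _ fun y => ?_)
  · rw [Pi.inv_apply, Real.norm_of_nonneg (inv_nonneg.2 (hlam.le.trans (hα y).1))]
    exact inv_anti₀ hlam (hα y).1
  · have := (hlam.trans_le (hα y).1).ne'
    simp only [Pi.inv_apply]
    field_simp

lemma mul_integral_sub_mul_fracKernel_le (hα : ∀ y, α y ∈ Icc lam Lam) (hB : ∀ y, 0 ≤ B y)
    (hgB : ∀ y, g y ≤ B y) (hBint : Integrable (fun y => B y * fracKernel σ y) μ)
    (hgint : Integrable (fun y => g y * fracKernel σ y) μ)
    (hgαint : Integrable (fun y => g y * α y * fracKernel σ y) μ) :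
    lam * ∫ y, (B y - g y) * fracKernel σ y ∂μ ≤
      Lam * ∫ y, B y * fracKernel σ y ∂μ - ∫ y, g y * α y * fracKernel σ y ∂μ := by
  have hdiff : Integrable (fun y => (B y - g y) * fracKernel σ y) μ := by
    simp only [sub_mul]; exact hBint.sub hgint
  rw [← integral_const_mul, ← integral_const_mul, ← integral_sub (hBint.const_mul _) hgαint]
  refine integral_mono (hdiff.const_mul _) ((hBint.const_mul _).sub hgαint) fun y => ?_
  have hpt : lam * (B y - g y) ≤ Lam * B y - g y * α y := by
    have hlow := mul_le_mul_of_nonneg_right (hα y).1 (sub_nonneg.2 (hgB y))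
    have hhigh := mul_le_mul_of_nonneg_right (hα y).2 (hB y)
    linarith
  calc lam * ((B y - g y) * fracKernel σ y) = lam * (B y - g y) * fracKernel σ y := by ring
    _ ≤ (Lam * B y - g y * α y) * fracKernel σ y :=
      mul_le_mul_of_nonneg_right hpt (fracKernel_nonneg σ y)
    _ = Lam * (B y * fracKernel σ y) - g y * α y * fracKernel σ y := by ring

end Ellipticity

section BellmanEquation

lemma weighted_add_le {P X Y F a S M t : ℝ} (hP : 0 ≤ P) (ht : t ≤ 2) (hX : 0 ≤ X) (hY : 0 ≤ Y)
    (hF : 0 ≤ F) (ha : 0 ≤ a) (hS : 0 ≤ S) (hM : 0 ≤ M) :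
    P * X + P * t * Y + 1 / 2 * F + P * (a * (t / 2 * S + M)) ≤
      (1 + 2 * P) * (X + Y + F + a * (S + M)) := by
  have : 0 ≤ 2 - t := sub_nonneg.2 ht
  have : 0 ≤ (1 + P) * X + (1 + P * (2 - t)) * Y + (1 / 2 + 2 * P) * F +
      (1 + P * (1 + (2 - t) / 2)) * (a * S) + (1 + P) * (a * M) := by positivity
  linarith

variable {E A : Type*} [NormedAddCommGroup E] [NormedSpace ℝ E] [MeasurableSpace E]

/-- `u` solves the Bellman equation `inf_β (L_β u + f_β) = 0` in the unit ball, where `L_β` is the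
nonlocal operator of order `σ` with coefficient `a β`. The coefficients lie between `lam` and
`Lam` and have modulus of continuity `Lam * ωa` in the first variable, the data `f β` have modulus
of continuity `ωf`. -/
structure IsBellmanSolution (μ : Measure E) (σ lam Lam : ℝ) (ωa ωf : ℝ → ℝ) (a : A → E → E → ℝ)
    (f : A → E → ℝ) (u : E → ℝ) : Prop where
  coeff_mem_Icc : ∀ β x y, a β x y ∈ Icc lam Lam
  measurable_coeff : ∀ β x, Measurable (a β x)
  abs_coeff_sub_le : ∀ β x x' y, x ≠ x' → |a β x y - a β x' y| ≤ Lam * ωa ‖x - x'‖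
  abs_data_sub_le : ∀ β, ∀ x ∈ ball (0 : E) 1, ∀ x' ∈ ball (0 : E) 1,
    x ≠ x' → |f β x - f β x'| ≤ ωf ‖x - x'‖
  integrable : ∀ β, ∀ x ∈ ball (0 : E) 1,
    Integrable (fun y => (u (x + y) - u x) * a β x y * fracKernel σ y) μ
  isGLB : ∀ x ∈ ball (0 : E) 1,
    IsGLB {v | ∃ β, v = (∫ y, (u (x + y) - u x) * a β x y * fracKernel σ y ∂μ) + f β x} 0

/-- The constant of the step inequality `IsBellmanSolution.holderQuotient_le`, which compares
consecutive dyadic scales. -/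
def dyadicStepConst (μ : Measure E) (σ lam Lam : ℝ) : ℝ :=
  averagingConst μ σ * lam⁻¹ * (1 + 2 * (Lam * kernelMass μ σ))

lemma dyadicStepConst_pos [FiniteDimensional ℝ E] (μ : Measure E) [μ.IsAddHaarMeasure] (σ : ℝ)
    {lam Lam : ℝ} (hlam : 0 < lam) (hLam : 0 ≤ Lam) : 0 < dyadicStepConst μ σ lam Lam := by
  have := averagingConst_pos μ σ
  have := kernelMass_nonneg μ σ
  unfold dyadicStepConst
  positivity

namespace IsBellmanSolution

variable {μ : Measure E} {σ lam Lam : ℝ} {ωa ωf : ℝ → ℝ} {a : A → E → E → ℝ} {f : A → E → ℝ}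
  {u : E → ℝ} {x h : E} {r R δ ρ ρ' L M U I : ℝ}

lemma Lam_pos (H : IsBellmanSolution μ σ lam Lam ωa ωf a f u) (hlam : 0 < lam) : 0 < Lam := by
  obtain ⟨_, β, -⟩ := (H.isGLB 0 (mem_ball_self one_pos)).nonempty
  exact hlam.trans_le ((H.coeff_mem_Icc β 0 0).1.trans (H.coeff_mem_Icc β 0 0).2)

lemma integrable_sub_mul_fracKernel (H : IsBellmanSolution μ σ lam Lam ωa ωf a f u)
    (hlam : 0 < lam) (hx : x ∈ ball 0 1) :
    Integrable (fun y => (u (x + y) - u x) * fracKernel σ y) μ := by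
  obtain ⟨_, β, -⟩ := (H.isGLB x hx).nonempty
  exact integrable_mul_fracKernel_of_mul_mul hlam (H.coeff_mem_Icc β x) (H.measurable_coeff β x)
    (H.integrable β x hx)

lemma integrable_abs_sub_mul_fracKernel (H : IsBellmanSolution μ σ lam Lam ωa ωf a f u)
    (hlam : 0 < lam) (hx : x ∈ ball 0 1) :
    Integrable (fun y => |u (x + y) - u x| * fracKernel σ y) μ :=
  (H.integrable_sub_mul_fracKernel hlam hx).norm.congr <| ae_of_all _ fun y => by
    simp only [norm_mul, Real.norm_eq_abs, abs_of_nonneg (fracKernel_nonneg σ y)]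

lemma integrable_fwdDiff_sub_mul_fracKernel (H : IsBellmanSolution μ σ lam Lam ωa ωf a f u)
    (hlam : 0 < lam) (hx : x ∈ ball 0 1) (hxh : x + h ∈ ball 0 1) :
    Integrable (fun y => (fwdDiff h u (x + y) - fwdDiff h u x) * fracKernel σ y) μ :=
  ((H.integrable_sub_mul_fracKernel hlam hxh).sub (H.integrable_sub_mul_fracKernel hlam hx)).congr
    <| ae_of_all _ fun y => by
      simp only [Pi.sub_apply, fwdDiff, add_right_comm x h y]
      ring

/-- The index `β` is nearly optimal at `x`; at `x + h` it is a competitor, whose coefficient is then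
replaced by the one at `x`. -/
lemma exists_neg_lt_integral_fwdDiff_sub (H : IsBellmanSolution μ σ lam Lam ωa ωf a f u)
    (hlam : 0 < lam) (hx : x ∈ ball 0 1) (hxh : x + h ∈ ball 0 1) (hh : h ≠ 0) {e : ℝ}
    (he : 0 < e) : ∃ β, -(ωf ‖h‖ + Lam * ωa ‖h‖ * nonlocalVariation μ σ u (x + h)) - e <
      ∫ y, (fwdDiff h u (x + y) - fwdDiff h u x) * a β x y * fracKernel σ y ∂μ := by
  obtain ⟨_, ⟨β, rfl⟩, -, hβ⟩ := (H.isGLB x hx).exists_between he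
  refine ⟨β, ?_⟩
  have hsub := (H.isGLB (x + h) hxh).1 ⟨β, rfl⟩
  have hne : x + h ≠ x := by simpa using hh
  have hf := (abs_le.1 (H.abs_data_sub_le β (x + h) hxh x hx hne)).2
  have hint := integrable_mul_mul_fracKernel hlam.le (H.coeff_mem_Icc β x) (H.measurable_coeff β x)
    (H.integrable_fwdDiff_sub_mul_fracKernel hlam hx hxh)
  have hvar := (H.integrable_abs_sub_mul_fracKernel hlam hxh).const_mul (Lam * ωa ‖h‖)
  have hfreeze : ∫ y, (u (x + h + y) - u (x + h)) * a β (x + h) y * fracKernel σ y ∂μ ≤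
      ∫ y, ((fwdDiff h u (x + y) - fwdDiff h u x) * a β x y * fracKernel σ y
        + (u (x + y) - u x) * a β x y * fracKernel σ y)
        + Lam * ωa ‖h‖ * (|u (x + h + y) - u (x + h)| * fracKernel σ y) ∂μ := by
    refine integral_mono (H.integrable β _ hxh) ((hint.add (H.integrable β x hx)).add hvar)
      fun y => ?_
    have ha := H.abs_coeff_sub_le β (x + h) x y hne
    rw [add_sub_cancel_left] at ha
    have hprod : (u (x + h + y) - u (x + h)) * (a β (x + h) y - a β x y) ≤
        |u (x + h + y) - u (x + h)| * (Lam * ωa ‖h‖) :=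
      (le_abs_self _).trans ((abs_mul _ _).trans_le (by gcongr))
    have := mul_le_mul_of_nonneg_right hprod (fracKernel_nonneg σ y)
    simp only [fwdDiff, add_right_comm x y h]
    linarith
  rw [integral_add (by exact hint.add (H.integrable β x hx)) hvar,
    integral_add hint (H.integrable β x hx), integral_const_mul] at hfreeze
  rw [add_sub_cancel_left] at hf
  unfold nonlocalVariation
  linarith

lemma mul_integral_sub_fwdDiff_le (H : IsBellmanSolution μ σ lam Lam ωa ωf a f u)
    (hlam : 0 < lam) (hx : x ∈ ball 0 1) (hxh : x + h ∈ ball 0 1) (hh : h ≠ 0) {B : E → ℝ}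
    (hB : ∀ y, 0 ≤ B y) (hle : ∀ y, fwdDiff h u (x + y) - fwdDiff h u x ≤ B y)
    (hBint : Integrable (fun y => B y * fracKernel σ y) μ) :
    lam * ∫ y, (B y - (fwdDiff h u (x + y) - fwdDiff h u x)) * fracKernel σ y ∂μ ≤
      Lam * ∫ y, B y * fracKernel σ y ∂μ
        + (ωf ‖h‖ + Lam * ωa ‖h‖ * nonlocalVariation μ σ u (x + h)) := by
  refine le_of_forall_pos_le_add fun e he => ?_
  obtain ⟨β, hβ⟩ := H.exists_neg_lt_integral_fwdDiff_sub hlam hx hxh hh he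
  have hint := H.integrable_fwdDiff_sub_mul_fracKernel hlam hx hxh
  have := mul_integral_sub_mul_fracKernel_le (H.coeff_mem_Icc β x) hB hle hBint hint
    (integrable_mul_mul_fracKernel hlam.le (H.coeff_mem_Icc β x) (H.measurable_coeff β x) hint)
  linarith

variable [BorelSpace E] [FiniteDimensional ℝ E] [Nontrivial E] [μ.IsAddHaarMeasure]

lemma exists_two_mul_fwdDiff_le (H : IsBellmanSolution μ σ lam Lam ωa ωf a f u) (hσ : 0 < σ)
    (hlam : 0 < lam) (hx : x ∈ ball 0 1) (hxh : x + h ∈ ball 0 1) (hh : h ≠ 0) {B : E → ℝ}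
    (hB : ∀ y, 0 ≤ B y) (hle : ∀ y, fwdDiff h u (x + y) - fwdDiff h u x ≤ B y)
    (hBint : Integrable (fun y => B y * fracKernel σ y) μ) (hr : 0 < r) (hhr : ‖h‖ ≤ r) :
    ∃ y ∈ ball (0 : E) r, 2 * fwdDiff h u x ≤ fwdDiff (h + h) u (x + y) +
      averagingConst μ σ * r ^ σ * (lam⁻¹ * (Lam * ∫ y, B y * fracKernel σ y ∂μ
        + (ωf ‖h‖ + Lam * ωa ‖h‖ * nonlocalVariation μ σ u (x + h)))) := by
  have hint : Integrable
      (fun y => (B y - (fwdDiff h u (x + y) - fwdDiff h u x)) * fracKernel σ y) μ := by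
    simp only [sub_mul (B _)]
    exact hBint.sub (H.integrable_fwdDiff_sub_mul_fracKernel hlam hx hxh)
  obtain ⟨y, hy, hG⟩ := exists_mem_ball_add_translate_le μ hσ (fun y => sub_nonneg.2 (hle y))
    hint hr hhr
  refine ⟨y, hy, ?_⟩
  have hdouble : fwdDiff h u (x + y) + fwdDiff h u (x + (y + h)) = fwdDiff (h + h) u (x + y) := by
    simp only [fwdDiff, add_assoc]; ring
  have hmass := H.mul_integral_sub_fwdDiff_le hlam hx hxh hh hB hle hBint
  rw [← le_inv_mul_iff₀ hlam] at hmass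
  have hconst : 0 ≤ averagingConst μ σ * r ^ σ :=
    mul_nonneg (averagingConst_pos μ σ).le (Real.rpow_nonneg hr.le σ)
  linarith [hB y, hB (y + h), mul_le_mul_of_nonneg_left hmass hconst]

lemma fwdDiff_le (H : IsBellmanSolution μ σ lam Lam ωa ωf a f u) (hσ : σ ∈ Ioo (0 : ℝ) 1)
    (hlam : 0 < lam) (hωa : MonotoneOn ωa (Ioi 0)) (hωa0 : 0 ≤ ωa r) (hωf : MonotoneOn ωf (Ioi 0))
    (hu : ContinuousOn u (ball 0 1)) (hM : ∀ x, |u x| ≤ M) (hU : ∀ x, |fwdDiff h u x| ≤ U)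
    (hI : ∀ x : E, ‖x‖ < ρ → nonlocalVariation μ σ u x ≤ I) (hr : 0 < r) (hh : h ≠ 0)
    (hhr : ‖h‖ ≤ r) (hR : 2 * r ≤ R) (hRδ : R ≤ δ) (hx : ‖x‖ + R + δ ≤ ρ) (hρ : ρ ≤ 1) :
    fwdDiff h u x ≤ 1 / 2 * localModulus u ρ (2 * r) +
      1 / 2 * (averagingConst μ σ * r ^ σ * (lam⁻¹ *
        (Lam * (kernelMass μ σ * (2 * localModulus u ρ r * R ^ (-σ) + 2 * U * δ ^ (-σ))) +
          (ωf r + Lam * ωa r * I)))) := by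
  have hLam := H.Lam_pos hlam
  have hR0 : 0 < R := by linarith
  have hU0 : 0 ≤ U := (abs_nonneg _).trans (hU x)
  have hnorm {z : E} (hz : z ∈ closedBall x R) : ‖z‖ ≤ ‖x‖ + R := norm_le_of_mem_closedBall hz
  have hw : ContinuousOn (fwdDiff h u) (closedBall x R) := by
    refine (hu.comp (by fun_prop) fun z hz => ?_).sub (hu.mono fun z hz => ?_)
    · exact mem_ball_zero_iff.2 (by linarith [norm_add_le z h, hnorm hz])
    · exact mem_ball_zero_iff.2 (by linarith [hnorm hz])
  obtain ⟨x₁, hx₁, hxx₁, htouch⟩ := exists_mem_closedBall_sub_le_barrier hR0 (hR0.trans_le hRδ) hx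
    hw (fun z hz => abs_fwdDiff_le_localModulus hM (mem_ball_zero_iff.1 hz) hhr) hU
  replace hx₁ := hnorm hx₁
  have hx₁h : ‖x₁ + h‖ < ρ := by linarith [norm_add_le x₁ h]
  obtain ⟨y, hy, hdouble⟩ := H.exists_two_mul_fwdDiff_le hσ.1 hlam
    (mem_ball_zero_iff.2 (by linarith)) (mem_ball_zero_iff.2 (hx₁h.trans_le hρ)) hh
    (barrier_nonneg (mul_nonneg zero_le_two (localModulus_nonneg u ρ r)) hR0.le (by positivity)
      (hR0.le.trans hRδ)) htouch
    (integrable_barrier_mul_fracKernel μ _ _ hσ hR0 (hR0.trans_le hRδ)) hr hhr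
  rw [integral_barrier_mul_fracKernel μ _ _ hσ hR0 (hR0.trans_le hRδ)] at hdouble
  have hscale : fwdDiff (h + h) u (x₁ + y) ≤ localModulus u ρ (2 * r) :=
    (le_abs_self _).trans (abs_fwdDiff_le_localModulus hM
      (by linarith [norm_add_le x₁ y, mem_ball_zero_iff.1 hy]) (by linarith [norm_add_le h h]))
  have hdata : ωf ‖h‖ + Lam * ωa ‖h‖ * nonlocalVariation μ σ u (x₁ + h) ≤
      ωf r + Lam * ωa r * I := by
    have := hωf (norm_pos_iff.2 hh) hr hhr
    have := hωa (norm_pos_iff.2 hh) hr hhr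
    have := nonlocalVariation_nonneg μ σ u (x₁ + h)
    have := hI (x₁ + h) hx₁h
    gcongr
  have hconst : 0 ≤ averagingConst μ σ * r ^ σ * lam⁻¹ := by
    have := averagingConst_pos μ σ
    positivity
  linarith [mul_le_mul_of_nonneg_left hdata hconst]

lemma localModulus_le_add (H : IsBellmanSolution μ σ lam Lam ωa ωf a f u) (hσ : σ ∈ Ioo (0 : ℝ) 1)
    (hlam : 0 < lam) (hωa : IsDini ωa) (hωf : IsDini ωf) (hu : ContinuousOn u (ball 0 1))
    (hM : ∀ x, |u x| ≤ M) (hU : ∀ x h, ‖h‖ ≤ r → |fwdDiff h u x| ≤ U)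
    (hI : ∀ x : E, ‖x‖ < ρ' → nonlocalVariation μ σ u x ≤ I) (hI0 : 0 ≤ I) (hr : 0 < r)
    (hL : 2 ≤ L) (hLr : 4 * (L * r) ≤ ρ' - ρ) (hρ' : ρ' ≤ 1) :
    localModulus u ρ r ≤ 1 / 2 * localModulus u ρ' (2 * r) +
      1 / 2 * (averagingConst μ σ * r ^ σ * (lam⁻¹ *
        (Lam * (kernelMass μ σ *
            (2 * localModulus u ρ' r * (L * r) ^ (-σ) + 2 * U * ((ρ' - ρ) / 2) ^ (-σ))) +
          (ωf r + Lam * ωa r * I)))) := by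
  have hLam := H.Lam_pos hlam
  have hLr' : 2 * r ≤ L * r := by gcongr
  have hgap : 0 < ρ' - ρ := by linarith
  have hκ := kernelMass_nonneg μ σ
  have hc := averagingConst_pos μ σ
  have hU0 : 0 ≤ U := (abs_nonneg _).trans (hU 0 0 (by simpa using hr.le))
  have hf0 := hωf.1 r hr
  have ha0 := hωa.1 r hr
  have hD := localModulus_nonneg u ρ' r
  have hD2 := localModulus_nonneg u ρ' (2 * r)
  exact localModulus_le_of_fwdDiff_le (by positivity) fun x h hx hh h0 =>
    H.fwdDiff_le hσ hlam hωa.2.1 ha0 hωf.2.1 hu hM (hU · h hh) hI hr h0 hh hLr' (by linarith)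
      (by linarith) hρ'

lemma holderQuotient_le (H : IsBellmanSolution μ σ lam Lam ωa ωf a f u) (hσ : σ ∈ Ioo (0 : ℝ) 1)
    (hlam : 0 < lam) (hωa : IsDini ωa) (hωf : IsDini ωf) (hu : ContinuousOn u (ball 0 1))
    (hM : ∀ x, |u x| ≤ M) (hU : ∀ x h, ‖h‖ ≤ r → |fwdDiff h u x| ≤ U)
    (hsum : Summable fun k : ℕ => holderQuotient σ u ρ' ((1 / 2) ^ k)) (hr : 0 < r) (hL : 2 ≤ L)
    (hLr : 4 * (L * r) ≤ ρ' - ρ) (hρ' : ρ' ≤ 1) :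
    holderQuotient σ u ρ r ≤ 2 ^ σ / 2 * holderQuotient σ u ρ' (2 * r) +
      dyadicStepConst μ σ lam Lam * (L ^ (-σ) * holderQuotient σ u ρ' r +
        (ρ' - ρ) ^ (-σ) * U + ωf r + ωa r * (dyadicSum σ u ρ' + M)) := by
  have hM0 : 0 ≤ M := (abs_nonneg _).trans (hM 0)
  have hU0 : 0 ≤ U := (abs_nonneg _).trans (hU 0 0 (by simpa using hr.le))
  have hS0 : 0 ≤ dyadicSum σ u ρ' := dyadicSum_nonneg
  have hκ := kernelMass_nonneg μ σ
  have hLam := H.Lam_pos hlam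
  have hc := averagingConst_pos μ σ
  have hf0 := hωf.1 r hr
  have ha0 := hωa.1 r hr
  have hgap : 0 < ρ' - ρ := by linarith [mul_pos (two_pos.trans_le hL) hr]
  have hstep := H.localModulus_le_add hσ hlam hωa hωf hu hM hU
    (fun _ => nonlocalVariation_le μ hσ hM hsum) (by positivity) hr hL hLr hρ'
  have hnormalized : holderQuotient σ u ρ r ≤ 2 ^ σ / 2 * holderQuotient σ u ρ' (2 * r) +
      averagingConst μ σ * lam⁻¹ * (Lam * kernelMass μ σ * (L ^ (-σ) * holderQuotient σ u ρ' r) +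
        Lam * kernelMass μ σ * 2 ^ σ * ((ρ' - ρ) ^ (-σ) * U) + 1 / 2 * ωf r +
        Lam * kernelMass μ σ * (ωa r * (2 ^ σ / 2 * dyadicSum σ u ρ' + M))) := by
    refine (mul_le_mul_of_nonneg_left hstep (Real.rpow_nonneg hr.le (-σ))).trans_eq ?_
    rw [Real.mul_rpow (by linarith) hr.le, Real.div_rpow hgap.le two_pos.le, holderQuotient,
      holderQuotient, Real.mul_rpow two_pos.le hr.le, Real.rpow_neg two_pos.le, Real.rpow_neg hr.le]
    have := (Real.rpow_pos_of_pos hr σ).ne'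
    field_simp
    ring
  refine hnormalized.trans (add_le_add_right ?_ _)
  have hX : 0 ≤ L ^ (-σ) * holderQuotient σ u ρ' r :=
    mul_nonneg (by positivity) (holderQuotient_nonneg hr.le)
  have hterms := weighted_add_le (P := Lam * kernelMass μ σ) (by positivity)
    (Real.rpow_le_self_of_one_le one_le_two hσ.2.le) hX
    (mul_nonneg (Real.rpow_nonneg hgap.le (-σ)) hU0) hf0 ha0 hS0 hM0
  rw [dyadicStepConst, mul_assoc (averagingConst μ σ * lam⁻¹)]
  exact mul_le_mul_of_nonneg_left hterms (by positivity)

end IsBellmanSolution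

end BellmanEquation

section DyadicSeries

lemma IsDini.summable_half_pow_succ {ω : ℝ → ℝ} (hω : IsDini ω) :
    Summable fun k : ℕ => ω ((1 / 2) ^ (k + 1)) := by
  have hanti : Antitone fun k : ℕ => ((1 : ℝ) / 2) ^ k :=
    pow_right_anti₀ (by norm_num) (by norm_num)
  have hsub (k : ℕ) : Ioc (((1 : ℝ) / 2) ^ (k + 1)) ((1 / 2) ^ k) ⊆ Ioc 0 1 :=
    Ioc_subset_Ioc (by positivity) (pow_le_one₀ (by norm_num) (by norm_num))
  have hsum : Summable fun k : ℕ =>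
      ∫ r in Ioc (((1 : ℝ) / 2) ^ (k + 1)) ((1 / 2) ^ k), ω r / r :=
    (hasSum_integral_iUnion (fun _ => measurableSet_Ioc) hanti.pairwise_disjoint_on_Ioc_succ
      (hω.2.2.mono_set (iUnion_subset hsub))).summable
  refine .of_nonneg_of_le (fun k => hω.1 _ (by positivity)) (fun k => ?_) (hsum.mul_left 2)
  have hpos : (0 : ℝ) < (1 / 2) ^ (k + 1) := by positivity
  have hle : ∫ _ in Ioc (((1 : ℝ) / 2) ^ (k + 1)) ((1 / 2) ^ k),
      ω ((1 / 2) ^ (k + 1)) / (1 / 2) ^ k ≤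
        ∫ r in Ioc (((1 : ℝ) / 2) ^ (k + 1)) ((1 / 2) ^ k), ω r / r :=
    setIntegral_mono_on (integrableOn_const (by simp)) (hω.2.2.mono_set (hsub k))
      measurableSet_Ioc fun t ht => div_le_div₀ (hω.1 t (hpos.trans ht.1))
        (hω.2.1 hpos (hpos.trans ht.1) ht.1.le) (hpos.trans ht.1) ht.2
  rw [setIntegral_const, Real.volume_real_Ioc_of_le (by exact hanti k.le_succ), smul_eq_mul] at hle
  have hvol : (((1 : ℝ) / 2) ^ k - (1 / 2) ^ (k + 1)) *
      (ω ((1 / 2) ^ (k + 1)) / (1 / 2) ^ k) = ω ((1 / 2) ^ (k + 1)) / 2 := by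
    rw [pow_succ _ k]
    field_simp
    ring
  linarith

lemma IsDini.tsum_half_pow_nonneg {ω : ℝ → ℝ} (hω : IsDini ω) :
    0 ≤ ∑' k : ℕ, ω ((1 / 2) ^ (k + 1)) :=
  tsum_nonneg fun _ => hω.1 _ (by positivity)

lemma IsDini.tsum_half_pow_add_le {ω : ℝ → ℝ} (hω : IsDini ω) (n : ℕ) :
    ∑' k : ℕ, ω ((1 / 2) ^ (k + n + 1)) ≤ ∑' k : ℕ, ω ((1 / 2) ^ (k + 1)) :=
  tsum_comp_le_tsum_of_inj hω.summable_half_pow_succ (fun _ => hω.1 _ (by positivity))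
    (add_left_injective n)

lemma tsum_le_sum_range_add {X X' Y : ℕ → ℝ} {p e : ℝ} (n : ℕ) (hX : Summable X)
    (hX' : Summable X') (hX'0 : ∀ k, 0 ≤ X' k) (hY : Summable Y) (hp : 0 ≤ p) (he : 0 ≤ e)
    (h : ∀ k, X (k + (n + 1)) ≤ p * X' (k + n) + e * X' (k + (n + 1)) + Y k) :
    ∑' k, X k ≤ ∑ k ∈ Finset.range (n + 1), X k + (p + e) * ∑' k, X' k + ∑' k, Y k := by
  have htail (m : ℕ) : ∑' k, X' (k + m) ≤ ∑' k, X' k :=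
    tsum_comp_le_tsum_of_inj hX' hX'0 (add_left_injective m)
  have hsum (m : ℕ) : Summable fun k => X' (k + m) := (summable_nat_add_iff m).2 hX'
  have hle := ((summable_nat_add_iff (n + 1)).2 hX).tsum_le_tsum h
    ((((hsum n).mul_left p).add ((hsum (n + 1)).mul_left e)).add hY)
  rw [(((hsum n).mul_left p).add ((hsum (n + 1)).mul_left e)).tsum_add hY,
    ((hsum n).mul_left p).tsum_add ((hsum (n + 1)).mul_left e), tsum_mul_left, tsum_mul_left] at hle
  rw [← hX.sum_add_tsum_nat_add (n + 1)]
  linarith [mul_le_mul_of_nonneg_left (htail n) hp, mul_le_mul_of_nonneg_left (htail (n + 1)) he]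

lemma exists_add_mul_rpow_neg_add_mul_tsum_le {p σ : ℝ} {ω : ℕ → ℝ} (hp : p < 1) (hσ : 0 < σ)
    (c : ℝ) : ∃ L ≥ 2, ∃ N : ℕ, 4 * (L * (1 / 2) ^ N) ≤ 1 ∧
      ∀ n ≥ N, p + c * L ^ (-σ) + c * ∑' k, ω (k + n) ≤ (1 + p) / 2 := by
  have hquarter : c * 0 < (1 - p) / 4 := by linarith
  obtain ⟨L, hL, hL2⟩ := ((((tendsto_rpow_neg_atTop hσ).const_mul c).eventually_lt_const
    hquarter).and (eventually_ge_atTop 2)).exists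
  have hscale : Tendsto (fun n : ℕ => 4 * (L * (1 / 2) ^ n)) atTop (𝓝 (4 * (L * 0))) :=
    ((tendsto_pow_atTop_nhds_zero_of_lt_one one_half_pos.le
      one_half_lt_one).const_mul L).const_mul 4
  obtain ⟨N, hN⟩ := eventually_atTop.1 ((hscale.eventually_le_const (u := 1) (by norm_num)).and
    (((tendsto_sum_nat_add ω).const_mul c).eventually_lt_const hquarter))
  exact ⟨L, hL2, N, (hN N le_rfl).1, fun n hn => by linarith [(hN n hn).2]⟩

end DyadicSeries

section Iteration

/-- Applying the hypothesis at the point `t` with `b - t = τ * (b - s)` bounds the supremum of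
`(b - s) ^ α * Z s` by `θ / τ ^ α` times itself plus a constant. -/
lemma le_mul_rpow_neg_of_forall_le {Z : ℝ → ℝ} {α θ τ K B s₀ b : ℝ} (hα : 0 ≤ α) (hθ0 : 0 ≤ θ)
    (hτ0 : 0 < τ) (hτ1 : τ < 1) (hθτ : θ < τ ^ α) (hs₀ : s₀ < b) (hB : ∀ s ∈ Ico s₀ b, Z s ≤ B)
    (hstep : ∀ s t, s₀ ≤ s → s < t → t < b → Z s ≤ θ * Z t + K * (t - s) ^ (-α)) :
    Z s₀ ≤ (1 - τ) ^ (-α) / (1 - θ / τ ^ α) * K * (b - s₀) ^ (-α) := by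
  have hτα := Real.rpow_pos_of_pos hτ0 α
  have hq : 0 < 1 - θ / τ ^ α := sub_pos.2 ((div_lt_one hτα).2 hθτ)
  set W := sSup ((fun s => (b - s) ^ α * Z s) '' Ico s₀ b)
  have hW (s) (hs : s ∈ Ico s₀ b) : (b - s) ^ α * Z s ≤ W := by
    refine le_csSup ⟨(b - s₀) ^ α * max B 0, ?_⟩ (mem_image_of_mem _ hs)
    rintro _ ⟨t, ht, rfl⟩
    have := sub_pos.2 ht.2
    have := ht.1
    exact (mul_le_mul_of_nonneg_left ((hB t ht).trans (le_max_left B 0)) (by positivity)).trans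
      (by gcongr)
  have hWle : W ≤ θ / τ ^ α * W + (1 - τ) ^ (-α) * K := by
    refine csSup_le ((nonempty_Ico.2 hs₀).image _) ?_
    rintro _ ⟨s, hs, rfl⟩
    have hbs := sub_pos.2 hs.2
    have hτbs : 0 < (1 - τ) * (b - s) := mul_pos (sub_pos.2 hτ1) hbs
    have hbt : b - (s + (1 - τ) * (b - s)) = τ * (b - s) := by ring
    have ht : s + (1 - τ) * (b - s) ∈ Ico s₀ b :=
      ⟨by linarith [hs.1], sub_pos.1 (hbt ▸ mul_pos hτ0 hbs)⟩
    have hWt := hW _ ht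
    have hst := hstep s _ hs.1 (lt_add_of_pos_right s hτbs) ht.2
    rw [add_sub_cancel_left, Real.mul_rpow (sub_pos.2 hτ1).le hbs.le, Real.rpow_neg hbs.le] at hst
    rw [hbt, Real.mul_rpow hτ0.le hbs.le] at hWt
    have := Real.rpow_pos_of_pos hbs α
    calc (b - s) ^ α * Z s
        ≤ (b - s) ^ α * (θ * Z (s + (1 - τ) * (b - s)) +
            K * ((1 - τ) ^ (-α) * ((b - s) ^ α)⁻¹)) := by gcongr
      _ = θ / τ ^ α * (τ ^ α * (b - s) ^ α * Z (s + (1 - τ) * (b - s))) + (1 - τ) ^ (-α) * K := by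
        field_simp
      _ ≤ θ / τ ^ α * W + (1 - τ) ^ (-α) * K := by gcongr
  rw [Real.rpow_neg (sub_pos.2 hs₀).le, ← div_eq_mul_inv,
    le_div_iff₀ (Real.rpow_pos_of_pos (sub_pos.2 hs₀) α), mul_comm (Z s₀), div_mul_eq_mul_div,
    le_div_iff₀ hq]
  have := mul_le_mul_of_nonneg_right (hW s₀ (left_mem_Ico.2 hs₀)) hq.le
  linarith

lemma exists_forall_le_mul_rpow_neg {α θ : ℝ} (hα : 0 ≤ α) (hθ0 : 0 ≤ θ) (hθ : θ < 1) :
    ∃ C > 0, ∀ (Z : ℝ → ℝ) (K B s₀ b : ℝ), s₀ < b → (∀ s ∈ Ico s₀ b, Z s ≤ B) →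
      (∀ s t, s₀ ≤ s → s < t → t < b → Z s ≤ θ * Z t + K * (t - s) ^ (-α)) →
      Z s₀ ≤ C * K * (b - s₀) ^ (-α) := by
  have hcont : Tendsto (fun τ : ℝ => τ ^ α) (𝓝[<] 1) (𝓝 (1 ^ α)) :=
    (Real.continuousAt_rpow_const 1 α (Or.inl one_ne_zero)).mono_left nhdsWithin_le_nhds
  obtain ⟨τ, hθτ, hτ0, hτ1⟩ := ((hcont.eventually_const_lt (by rwa [Real.one_rpow])).and
    (Ioo_mem_nhdsLT one_pos)).exists
  exact ⟨(1 - τ) ^ (-α) / (1 - θ / τ ^ α), div_pos (Real.rpow_pos_of_pos (sub_pos.2 hτ1) _)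
      (sub_pos.2 ((div_lt_one (Real.rpow_pos_of_pos hτ0 α)).2 hθτ)),
    fun _ _ _ _ _ => le_mul_rpow_neg_of_forall_le hα hθ0 hτ0 hτ1 hθτ⟩

end Iteration

section DyadicSum

variable {E : Type*} [NormedAddCommGroup E] {u : E → ℝ} {M σ ρ ρ' : ℝ}

lemma summable_holderQuotient_mono (hM : ∀ x, |u x| ≤ M) (h : ρ ≤ ρ')
    (hsum : Summable fun k : ℕ => holderQuotient σ u ρ' ((1 / 2) ^ k)) :
    Summable fun k : ℕ => holderQuotient σ u ρ ((1 / 2) ^ k) :=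
  .of_nonneg_of_le (fun _ => holderQuotient_nonneg (by positivity))
    (fun _ => holderQuotient_mono_left hM h (by positivity)) hsum

lemma dyadicSum_mono (hM : ∀ x, |u x| ≤ M) (h : ρ ≤ ρ')
    (hsum : Summable fun k : ℕ => holderQuotient σ u ρ' ((1 / 2) ^ k)) :
    dyadicSum σ u ρ ≤ dyadicSum σ u ρ' :=
  (summable_holderQuotient_mono hM h hsum).tsum_le_tsum
    (fun _ => holderQuotient_mono_left hM h (by positivity)) hsum

lemma exists_half_pow_lt_and_pow_le_rpow_neg {g : ℝ} (hσ : 0 ≤ σ) (hg : 0 < g) (hg1 : g ≤ 1) :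
    ∃ m : ℕ, (1 / 2) ^ (m + 1) < g ∧ ((2 : ℝ) ^ σ) ^ m ≤ g ^ (-σ) := by
  obtain ⟨m, hm, hm'⟩ := exists_nat_pow_near_of_lt_one hg hg1 one_half_pos one_half_lt_one
  exact ⟨m, hm, half_pow_rpow_neg σ m ▸ Real.rpow_le_rpow_of_nonpos hg hm' (neg_nonpos.2 hσ)⟩

lemma sum_range_holderQuotient_le (hσ : 0 < σ) (hM : ∀ x, |u x| ≤ M) (ρ : ℝ) (n : ℕ) :
    ∑ k ∈ Finset.range n, holderQuotient σ u ρ ((1 / 2) ^ k) ≤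
      2 / (2 ^ σ - 1) * M * (2 ^ σ) ^ n := by
  have hM0 : 0 ≤ M := (abs_nonneg _).trans (hM 0)
  have hb := Real.one_lt_rpow one_lt_two hσ
  calc ∑ k ∈ Finset.range n, holderQuotient σ u ρ ((1 / 2) ^ k)
      ≤ ∑ k ∈ Finset.range n, ((2 : ℝ) ^ σ) ^ k * (2 * M) := Finset.sum_le_sum fun k _ => by
        rw [holderQuotient, half_pow_rpow_neg]
        exact mul_le_mul_of_nonneg_left (localModulus_le_two_mul hM ρ _) (by positivity)
    _ = ((2 ^ σ) ^ n - 1) / (2 ^ σ - 1) * (2 * M) := by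
      rw [← Finset.sum_mul, geom_sum_eq hb.ne']
    _ ≤ (2 ^ σ) ^ n / (2 ^ σ - 1) * (2 * M) := by
      have := sub_pos.2 hb
      gcongr
      exact sub_le_self _ zero_le_one
    _ = 2 / (2 ^ σ - 1) * M * (2 ^ σ) ^ n := by ring

lemma absorb_step_le {D S M X Y x y T G θ e c Q : ℝ} (hc : 0 ≤ c) (hM : 0 ≤ M) (hS : 0 ≤ S)
    (hG : 1 ≤ G) (hX : 0 ≤ X) (hY : 0 ≤ Y) (hQ : 0 ≤ Q) (hx : x ≤ X) (hy : y ≤ Y)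
    (hθ : e + c * T ≤ θ) (hcT : c * T ≤ 1)
    (h : D ≤ Q * M * G + e * S + c * (G * x + y + T * (S + M))) :
    D ≤ θ * S + (Q + c + 1) * (M + X + Y) * G := by
  have : 0 ≤ G := zero_le_one.trans hG
  calc D ≤ Q * M * G + e * S + c * (G * x + y + T * (S + M)) := h
    _ = Q * M * G + (e + c * T) * S + c * (G * x + y) + c * T * M := by ring
    _ ≤ Q * M * G + θ * S + c * (G * X + Y * G) + M * G := by
      refine add_le_add ?_ ((mul_le_of_le_one_left hM hcT).trans (le_mul_of_one_le_right hM hG))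
      gcongr
      exact hy.trans (le_mul_of_one_le_right hY hG)
    _ ≤ θ * S + (Q + c + 1) * (M + X + Y) * G := by
      have : 0 ≤ (Q * (X + Y) + c * M + (X + Y)) * G := by positivity
      linarith

variable {A : Type*} [NormedSpace ℝ E] [MeasurableSpace E] [BorelSpace E] [FiniteDimensional ℝ E]
  [Nontrivial E] {μ : Measure E} [μ.IsAddHaarMeasure] {lam Lam L : ℝ} {ωa ωf ωu : ℝ → ℝ}
  {a : A → E → E → ℝ} {f : A → E → ℝ}

namespace IsBellmanSolution

lemma dyadicSum_le_sum_range_add (H : IsBellmanSolution μ σ lam Lam ωa ωf a f u)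
    (hσ : σ ∈ Ioo (0 : ℝ) 1) (hlam : 0 < lam) (hωa : IsDini ωa) (hωf : IsDini ωf)
    (hωu : IsDini ωu) (hu : ContinuousOn u (ball 0 1)) (hM : ∀ x, |u x| ≤ M)
    (huω : ∀ r > 0, ∀ x h, ‖h‖ ≤ r → |fwdDiff h u x| ≤ ωu r)
    (hsum : Summable fun k : ℕ => holderQuotient σ u ρ' ((1 / 2) ^ k)) (hL : 2 ≤ L) {n : ℕ}
    (hLn : 4 * (L * (1 / 2) ^ (n + 1)) ≤ ρ' - ρ) (hρ' : ρ' ≤ 1) :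
    dyadicSum σ u ρ ≤ ∑ k ∈ Finset.range (n + 1), holderQuotient σ u ρ ((1 / 2) ^ k) +
      (2 ^ σ / 2 + dyadicStepConst μ σ lam Lam * L ^ (-σ)) * dyadicSum σ u ρ' +
      dyadicStepConst μ σ lam Lam * ((ρ' - ρ) ^ (-σ) * ∑' k : ℕ, ωu ((1 / 2) ^ (k + n + 1)) +
        ∑' k : ℕ, ωf ((1 / 2) ^ (k + n + 1)) +
        (∑' k : ℕ, ωa ((1 / 2) ^ (k + n + 1))) * (dyadicSum σ u ρ' + M)) := by
  have hc := (dyadicStepConst_pos μ σ hlam (H.Lam_pos hlam).le).le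
  have hρ : ρ ≤ ρ' := sub_nonneg.1 ((show 0 ≤ 4 * (L * (1 / 2) ^ (n + 1)) by positivity).trans hLn)
  have hshift {ω : ℝ → ℝ} (hω : IsDini ω) : Summable fun k : ℕ => ω ((1 / 2) ^ (k + n + 1)) :=
    (summable_nat_add_iff n).2 hω.summable_half_pow_succ
  have hY := ((((hshift hωu).mul_left ((ρ' - ρ) ^ (-σ))).add (hshift hωf)).add
    ((hshift hωa).mul_right (dyadicSum σ u ρ' + M)))
  have hle := tsum_le_sum_range_add n (summable_holderQuotient_mono hM hρ hsum) hsum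
    (fun _ => holderQuotient_nonneg (by positivity)) (hY.mul_left (dyadicStepConst μ σ lam Lam))
    (p := 2 ^ σ / 2) (e := dyadicStepConst μ σ lam Lam * L ^ (-σ)) (by positivity) (by positivity)
    fun k => by
      have hr : (0 : ℝ) < (1 / 2) ^ (k + n + 1) := by positivity
      have hscale : (1 / 2 : ℝ) ^ (k + n + 1) ≤ (1 / 2) ^ (n + 1) :=
        pow_le_pow_of_le_one one_half_pos.le one_half_lt_one.le (by omega)
      have hdouble : 2 * (1 / 2 : ℝ) ^ (k + n + 1) = (1 / 2) ^ (k + n) := by rw [pow_succ]; ring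
      have hstep := H.holderQuotient_le hσ hlam hωa hωf hu hM (huω _ hr) hsum hr hL
        (le_trans (by gcongr) hLn) hρ'
      rw [hdouble] at hstep
      exact hstep.trans_eq (by ring_nf)
  rwa [tsum_mul_left, (((hshift hωu).mul_left _).add (hshift hωf)).tsum_add
    ((hshift hωa).mul_right _), ((hshift hωu).mul_left _).tsum_add (hshift hωf), tsum_mul_left,
    tsum_mul_right] at hle

lemma dyadicSum_le_of_lt (H : IsBellmanSolution μ σ lam Lam ωa ωf a f u)
    (hσ : σ ∈ Ioo (0 : ℝ) 1) (hlam : 0 < lam) (hωa : IsDini ωa) (hωf : IsDini ωf)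
    (hωu : IsDini ωu) (hu : ContinuousOn u (ball 0 1)) (hM : ∀ x, |u x| ≤ M)
    (huω : ∀ r > 0, ∀ x h, ‖h‖ ≤ r → |fwdDiff h u x| ≤ ωu r)
    (hsum : Summable fun k : ℕ => holderQuotient σ u ρ' ((1 / 2) ^ k)) (hL : 2 ≤ L) {N : ℕ}
    (hLN : 4 * (L * (1 / 2) ^ N) ≤ 1)
    (hθ : ∀ n ≥ N, 2 ^ σ / 2 + dyadicStepConst μ σ lam Lam * L ^ (-σ) +
      dyadicStepConst μ σ lam Lam * ∑' k : ℕ, ωa ((1 / 2) ^ (k + n + 1)) ≤ (1 + 2 ^ σ / 2) / 2)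
    (hρ : 0 ≤ ρ) (hρρ' : ρ < ρ') (hρ' : ρ' ≤ 1) :
    dyadicSum σ u ρ ≤ (1 + 2 ^ σ / 2) / 2 * dyadicSum σ u ρ' +
      (2 / (2 ^ σ - 1) * (2 ^ σ) ^ (N + 1) + dyadicStepConst μ σ lam Lam + 1) *
        (M + ∑' k : ℕ, ωu ((1 / 2) ^ (k + 1)) + ∑' k : ℕ, ωf ((1 / 2) ^ (k + 1))) *
        (ρ' - ρ) ^ (-σ) := by
  obtain ⟨m, hm, hG⟩ :=
    exists_half_pow_lt_and_pow_le_rpow_neg hσ.1.le (sub_pos.2 hρρ') (by linarith)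
  have hLn : 4 * (L * (1 / 2) ^ (m + N + 1)) ≤ ρ' - ρ := by
    refine le_trans ?_ hm.le
    rw [show m + N + 1 = N + (m + 1) by ring, pow_add, ← mul_assoc, ← mul_assoc, mul_assoc 4]
    exact mul_le_of_le_one_left (by positivity) hLN
  have hle := H.dyadicSum_le_sum_range_add hσ hlam hωa hωf hωu hu hM huω hsum hL hLn hρ'
  have hc := dyadicStepConst_pos μ σ hlam (H.Lam_pos hlam).le
  have hb := Real.one_lt_rpow one_lt_two hσ.1
  have := sub_pos.2 hb
  have hM0 : 0 ≤ M := (abs_nonneg _).trans (hM 0)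
  have hhead : ∑ k ∈ Finset.range (m + N + 1), holderQuotient σ u ρ ((1 / 2) ^ k) ≤
      2 / (2 ^ σ - 1) * (2 ^ σ) ^ (N + 1) * M * (ρ' - ρ) ^ (-σ) :=
    calc _ ≤ 2 / (2 ^ σ - 1) * M * (2 ^ σ) ^ (m + N + 1) := sum_range_holderQuotient_le hσ.1 hM _ _
      _ = 2 / (2 ^ σ - 1) * (2 ^ σ) ^ (N + 1) * M * (2 ^ σ) ^ m := by ring
      _ ≤ 2 / (2 ^ σ - 1) * (2 ^ σ) ^ (N + 1) * M * (ρ' - ρ) ^ (-σ) := by gcongr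
  have hcT : dyadicStepConst μ σ lam Lam * ∑' k : ℕ, ωa ((1 / 2) ^ (k + (m + N) + 1)) ≤ 1 := by
    have := Real.rpow_le_self_of_one_le one_le_two hσ.2.le
    have : 0 ≤ dyadicStepConst μ σ lam Lam * L ^ (-σ) := by positivity
    linarith [hθ (m + N) (Nat.le_add_left N m)]
  exact absorb_step_le hc.le hM0 dyadicSum_nonneg ((one_le_pow₀ hb.le).trans hG)
    hωu.tsum_half_pow_nonneg hωf.tsum_half_pow_nonneg (by positivity)
    (hωu.tsum_half_pow_add_le (m + N)) (hωf.tsum_half_pow_add_le (m + N))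
    (hθ (m + N) (Nat.le_add_left N m)) hcT (hle.trans (by gcongr))

end IsBellmanSolution

theorem exists_forall_dyadicSum_le (μ : Measure E) [μ.IsAddHaarMeasure] {σ lam Lam : ℝ}
    {ωa : ℝ → ℝ} (hσ : σ ∈ Ioo (0 : ℝ) 1) (hlam : 0 < lam) (hLam : 0 ≤ Lam) (hωa : IsDini ωa) :
    ∃ C > 0, ∀ {A : Type*} {a : A → E → E → ℝ} {f : A → E → ℝ} {u : E → ℝ} {ωf ωu : ℝ → ℝ} {M : ℝ},
      IsBellmanSolution μ σ lam Lam ωa ωf a f u → IsDini ωf → IsDini ωu →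
      ContinuousOn u (ball 0 1) → (∀ x, |u x| ≤ M) →
      (∀ r > 0, ∀ x h, ‖h‖ ≤ r → |fwdDiff h u x| ≤ ωu r) →
      (Summable fun k : ℕ => holderQuotient σ u (3 / 4) ((1 / 2) ^ k)) →
      dyadicSum σ u (1 / 2) ≤
        C * (M + ∑' k : ℕ, ωu ((1 / 2) ^ (k + 1)) + ∑' k : ℕ, ωf ((1 / 2) ^ (k + 1))) := by
  have hp : (2 : ℝ) ^ σ / 2 < 1 := by
    have := Real.rpow_lt_rpow_of_exponent_lt one_lt_two hσ.2
    rw [Real.rpow_one] at this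
    linarith
  obtain ⟨L, hL, N, hLN, hθ⟩ := exists_add_mul_rpow_neg_add_mul_tsum_le
    (ω := fun k => ωa ((1 / 2) ^ (k + 1))) hp hσ.1 (dyadicStepConst μ σ lam Lam)
  obtain ⟨C, hC, hiter⟩ := exists_forall_le_mul_rpow_neg hσ.1.le
    (show 0 ≤ (1 + (2 : ℝ) ^ σ / 2) / 2 by positivity) (show _ < 1 by linarith)
  have hb := sub_pos.2 (Real.one_lt_rpow one_lt_two hσ.1)
  have hc := dyadicStepConst_pos μ σ hlam hLam
  refine ⟨C * (2 / (2 ^ σ - 1) * (2 ^ σ) ^ (N + 1) + dyadicStepConst μ σ lam Lam + 1) *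
    (3 / 4 - 1 / 2) ^ (-σ), by positivity, fun H hωf hωu hu hM huω hsum => ?_⟩
  refine (hiter (dyadicSum σ _) _ _ (1 / 2) (3 / 4) (by norm_num)
    (fun s hs => dyadicSum_mono hM hs.2.le hsum) fun s t hs hst ht =>
      H.dyadicSum_le_of_lt hσ hlam hωa hωf hωu hu hM huω
        (summable_holderQuotient_mono hM ht.le hsum) hL hLN hθ (by linarith) hst
        (by linarith)).trans_eq ?_
  ring

end DyadicSum
section HolderSeminorm

section NormedTarget

variable {E F : Type*} [NormedAddCommGroup E] [NormedAddCommGroup F] {u : E → F} {Ω Ω' : Set E}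
  {γ σ c D ρ R : ℝ}

lemma holderSemi_le (h : ∀ x ∈ Ω, ∀ y ∈ Ω, ‖u x - u y‖ ≤ c * ‖x - y‖ ^ γ) :
    holderSemi γ Ω u ≤ ENNReal.ofReal c :=
  iSup₂_le fun x hx => iSup₂_le fun y hy => iSup_le fun hxy => ENNReal.ofReal_le_ofReal <|
    (div_le_iff₀ (Real.rpow_pos_of_pos (norm_sub_pos_iff.2 hxy) γ)).2 (h x hx y hy)

lemma ofReal_div_le_holderSemi {x y : E} (hx : x ∈ Ω) (hy : y ∈ Ω) (hxy : x ≠ y) :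
    ENNReal.ofReal (‖u x - u y‖ / ‖x - y‖ ^ γ) ≤ holderSemi γ Ω u :=
  le_iSup₂_of_le x hx <| le_iSup₂_of_le y hy <| le_iSup_of_le hxy le_rfl

lemma norm_sub_le_holderSemi_mul (h : holderSemi γ Ω u < ⊤) {x y : E} (hx : x ∈ Ω) (hy : y ∈ Ω) :
    ‖u x - u y‖ ≤ (holderSemi γ Ω u).toReal * ‖x - y‖ ^ γ := by
  rcases eq_or_ne x y with rfl | hxy
  · rw [sub_self, norm_zero]
    positivity
  · exact (div_le_iff₀ (Real.rpow_pos_of_pos (norm_sub_pos_iff.2 hxy) γ)).1 <|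
      (ENNReal.ofReal_le_iff_le_toReal h.ne).1 (ofReal_div_le_holderSemi hx hy hxy)

lemma continuousOn_of_holderSemi_lt_top (hγ : 0 < γ) (h : holderSemi γ Ω u < ⊤) :
    ContinuousOn u Ω := by
  refine HolderOnWith.continuousOn (C := (holderSemi γ Ω u).toNNReal) (r := γ.toNNReal)
    (fun x hx y hy => ?_) (Real.toNNReal_pos.2 hγ)
  rw [ENNReal.coe_toNNReal h.ne, Real.coe_toNNReal γ hγ.le]
  rw [edist_eq_enorm_sub, edist_eq_enorm_sub, ← ofReal_norm, ← ofReal_norm]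
  rw [ENNReal.ofReal_rpow_of_nonneg (norm_nonneg _) hγ.le, ← ENNReal.ofReal_toReal h.ne,
    ← ENNReal.ofReal_mul ENNReal.toReal_nonneg]
  exact ENNReal.ofReal_le_ofReal (norm_sub_le_holderSemi_mul h hx hy)

lemma holderSemi_le_mul (hσγ : σ ≤ γ) (hΩ : Ω' ⊆ Ω) (hD : ∀ x ∈ Ω', ∀ y ∈ Ω', ‖x - y‖ ≤ D) :
    holderSemi σ Ω' u ≤ ENNReal.ofReal (D ^ (γ - σ)) * holderSemi γ Ω u := by
  refine iSup₂_le fun x hx => iSup₂_le fun y hy => iSup_le fun hxy => ?_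
  have hpos := norm_sub_pos_iff.2 hxy
  have hsplit : ‖u x - u y‖ / ‖x - y‖ ^ σ =
      ‖x - y‖ ^ (γ - σ) * (‖u x - u y‖ / ‖x - y‖ ^ γ) := by
    rw [Real.rpow_sub hpos]
    field_simp
  rw [hsplit, ENNReal.ofReal_mul (by positivity)]
  gcongr
  · exact hD x hx y hy
  · exact ofReal_div_le_holderSemi (hΩ hx) (hΩ hy) hxy

lemma tendsto_iSup_holderSemi_ball (hσγ : σ < γ) (hρ : ρ < R)
    (h : holderSemi γ (ball 0 R) u < ⊤) :
    Tendsto (fun r : ℝ => ⨆ x₀ ∈ ball (0 : E) ρ, holderSemi σ (ball x₀ r) u) (𝓝[>] 0) (𝓝 0) := by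
  have hzero : Tendsto (fun r : ℝ => ENNReal.ofReal ((2 * r) ^ (γ - σ)) *
      holderSemi γ (ball 0 R) u) (𝓝[>] 0) (𝓝 0) := by
    have hpow : Tendsto (fun r : ℝ => (2 * r) ^ (γ - σ)) (𝓝 0) (𝓝 ((2 * 0) ^ (γ - σ))) :=
      ((continuous_const.mul continuous_id).rpow_const
        fun _ => Or.inr (sub_pos.2 hσγ).le).tendsto 0
    rw [mul_zero, Real.zero_rpow (sub_pos.2 hσγ).ne'] at hpow
    simpa using ENNReal.Tendsto.mul_const
      (ENNReal.tendsto_ofReal (hpow.mono_left nhdsWithin_le_nhds)) (Or.inr h.ne)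
  refine tendsto_of_tendsto_of_tendsto_of_le_of_le' tendsto_const_nhds hzero
    (Eventually.of_forall fun _ => zero_le) ?_
  filter_upwards [Ioo_mem_nhdsGT (sub_pos.2 hρ)] with r hr
  refine iSup₂_le fun x₀ hx₀ => holderSemi_le_mul hσγ.le (ball_subset_ball' ?_) fun x hx y hy => ?_
  · rw [dist_zero_right]
    linarith [mem_ball_zero_iff.1 hx₀, hr.2]
  · rw [← dist_eq_norm]
    linarith [dist_triangle_right x y x₀, mem_ball.1 hx, mem_ball.1 hy]

end NormedTarget

variable {E : Type*} [NormedAddCommGroup E] {u : E → ℝ} {γ σ ρ R r M : ℝ}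

lemma holderQuotient_le_holderSemi_mul (hγ : 0 ≤ γ) (h : holderSemi γ (ball 0 R) u < ⊤)
    (hr : 0 < r) (hρ : ρ + r ≤ R) :
    holderQuotient σ u ρ r ≤ (holderSemi γ (ball 0 R) u).toReal * r ^ (γ - σ) := by
  have hle : localModulus u ρ r ≤ (holderSemi γ (ball 0 R) u).toReal * r ^ γ :=
    localModulus_le (by positivity) fun x y hx hy => by
      have hxy := norm_sub_le_holderSemi_mul h (x := x + y) (y := x)
        (mem_ball_zero_iff.2 (by linarith [norm_add_le x y])) (mem_ball_zero_iff.2 (by linarith))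
      rw [add_sub_cancel_left] at hxy
      exact hxy.trans (by gcongr)
  refine (mul_le_mul_of_nonneg_left hle (Real.rpow_nonneg hr.le (-σ))).trans_eq ?_
  rw [sub_eq_add_neg, Real.rpow_add hr]
  ring

lemma summable_holderQuotient (hγ : 0 ≤ γ) (hσγ : σ < γ) (h : holderSemi γ (ball 0 R) u < ⊤)
    (hρ : ρ < R) : Summable fun k : ℕ => holderQuotient σ u ρ ((1 / 2) ^ k) := by
  have hgeom : Summable fun k : ℕ =>
      (holderSemi γ (ball 0 R) u).toReal * ((2 : ℝ) ^ (-(γ - σ))) ^ k :=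
    (summable_geometric_of_lt_one (by positivity) (Real.rpow_lt_one_of_one_lt_of_neg one_lt_two
      (neg_neg_iff_pos.2 (sub_pos.2 hσγ)))).mul_left _
  refine .of_norm_bounded_eventually_nat hgeom ?_
  filter_upwards [(tendsto_pow_atTop_nhds_zero_of_lt_one one_half_pos.le
    one_half_lt_one).eventually_le_const (sub_pos.2 hρ)] with k hk
  rw [Real.norm_of_nonneg (holderQuotient_nonneg (by positivity)), ← half_pow_rpow_neg, neg_neg]
  exact holderQuotient_le_holderSemi_mul hγ h (by positivity) (by linarith)

lemma abs_fwdDiff_le_rpow_mul_dyadicSum (hσ : 0 < σ) (hM : ∀ x, |u x| ≤ M)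
    (hsum : Summable fun k : ℕ => holderQuotient σ u ρ ((1 / 2) ^ k)) {x h : E} (hx : ‖x‖ < ρ)
    (hh : ‖h‖ ≤ 1) : |fwdDiff h u x| ≤ 2 ^ σ * dyadicSum σ u ρ * ‖h‖ ^ σ := by
  rcases eq_or_ne h 0 with rfl | h0
  · simp [fwdDiff, Real.zero_rpow hσ.ne']
  obtain ⟨k, hk, hk'⟩ := exists_nat_pow_near_of_lt_one (norm_pos_iff.2 h0) hh
    (one_half_pos (α := ℝ)) one_half_lt_one
  calc |fwdDiff h u x| ≤ localModulus u ρ ((1 / 2) ^ k) := abs_fwdDiff_le_localModulus hM hx hk'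
    _ = ((1 / 2) ^ k) ^ σ * holderQuotient σ u ρ ((1 / 2) ^ k) :=
      localModulus_eq_rpow_mul_holderQuotient (by positivity)
    _ ≤ (2 * ‖h‖) ^ σ * dyadicSum σ u ρ := by
      gcongr
      · exact holderQuotient_nonneg (by positivity)
      · rw [pow_succ] at hk
        linarith
      · exact hsum.le_tsum k fun _ _ => holderQuotient_nonneg (by positivity)
    _ = 2 ^ σ * dyadicSum σ u ρ * ‖h‖ ^ σ := by
      rw [Real.mul_rpow two_pos.le (norm_nonneg h)]
      ring

lemma holderSemi_le_ofReal_dyadicSum (hσ : 0 < σ) (hM : ∀ x, |u x| ≤ M)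
    (hsum : Summable fun k : ℕ => holderQuotient σ u ρ ((1 / 2) ^ k)) (hρ : ρ ≤ 1 / 2) :
    holderSemi σ (ball 0 ρ) u ≤ ENNReal.ofReal (2 ^ σ * dyadicSum σ u ρ) :=
  holderSemi_le fun x hx y hy => by
    rw [mem_ball_zero_iff] at hx hy
    simpa [fwdDiff] using abs_fwdDiff_le_rpow_mul_dyadicSum hσ hM hsum (h := x - y) hy
      (by linarith [norm_sub_le x y])

end HolderSeminorm

section SupNorm

variable {E : Type*} {u : E → ℝ} {Ω : Set E} {M : ℝ}

lemma eSupNorm_le (h : ∀ x ∈ Ω, |u x| ≤ M) : eSupNorm Ω u ≤ ENNReal.ofReal M :=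
  iSup₂_le fun x hx => ENNReal.ofReal_le_ofReal (h x hx)

lemma abs_le_toReal_eSupNorm (h : eSupNorm Ω u ≠ ⊤) {x : E} (hx : x ∈ Ω) :
    |u x| ≤ (eSupNorm Ω u).toReal :=
  (ENNReal.ofReal_le_iff_le_toReal h).1 (le_iSup₂_of_le x hx le_rfl)

end SupNorm

section MainTheorem

lemma IsDini.abs_fwdDiff_le {E : Type*} [NormedAddCommGroup E] {u : E → ℝ} {ω : ℝ → ℝ} {r : ℝ}
    (hω : IsDini ω) (hu : ∀ x x', x ≠ x' → |u x - u x'| ≤ ω ‖x - x'‖) (hr : 0 < r) (x : E) {h : E}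
    (hh : ‖h‖ ≤ r) : |fwdDiff h u x| ≤ ω r := by
  rcases eq_or_ne h 0 with rfl | h0
  · simpa [fwdDiff] using hω.1 r hr
  · have hle := hu (x + h) x (by simpa using h0)
    rw [add_sub_cancel_left] at hle
    exact hle.trans (hω.2.1 (norm_pos_iff.2 h0) hr hh)

lemma IsDini.tsum_ofReal_add {ω ω' : ℝ → ℝ} (hω : IsDini ω) (hω' : IsDini ω') :
    ∑' k : ℕ, ENNReal.ofReal (ω ((1 / 2) ^ (k + 1)) + ω' ((1 / 2) ^ (k + 1))) =
      ENNReal.ofReal (∑' k : ℕ, ω ((1 / 2) ^ (k + 1)) + ∑' k : ℕ, ω' ((1 / 2) ^ (k + 1))) := by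
  rw [← hω.summable_half_pow_succ.tsum_add hω'.summable_half_pow_succ,
    ENNReal.ofReal_tsum_of_nonneg
      (fun k => add_nonneg (hω.1 _ (by positivity)) (hω'.1 _ (by positivity)))
      (hω.summable_half_pow_succ.add hω'.summable_half_pow_succ)]

lemma two_rpow_neg_natCast_add_one (j : ℕ) : (2 : ℝ) ^ (-((j : ℝ) + 1)) = (1 / 2) ^ (j + 1) := by
  rw [Real.rpow_neg two_pos.le, ← Nat.cast_add_one, Real.rpow_natCast, one_div, inv_pow]

theorem dini_estimate_order_lt_one_general {E : Type*} [NormedAddCommGroup E] [NormedSpace ℝ E]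
    [FiniteDimensional ℝ E] [Nontrivial E] [MeasurableSpace E] [BorelSpace E] (μ : Measure E)
    [μ.IsAddHaarMeasure] {σ lam Lam : ℝ} {ωa : ℝ → ℝ} (hσ : σ ∈ Ioo (0 : ℝ) 1) (hlam : 0 < lam)
    (hLam : 0 ≤ Lam) (hωa : IsDini ωa) :
    ∃ C > 0, ∀ {A : Type*} {a : A → E → E → ℝ} {f : A → E → ℝ} {u : E → ℝ} {ωf ωu : ℝ → ℝ} {γ : ℝ},
      IsBellmanSolution μ σ lam Lam ωa ωf a f u → IsDini ωf → IsDini ωu →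
      (∃ M, ∀ x, |u x| ≤ M) → (∀ x x', x ≠ x' → |u x - u x'| ≤ ωu ‖x - x'‖) →
      σ < γ → holderSemi γ (ball 0 1) u < ⊤ →
      (holderSemi σ (ball 0 (1 / 2)) u ≤ ENNReal.ofReal C * eSupNorm univ u + ENNReal.ofReal C *
          ∑' j : ℕ, ENNReal.ofReal (ωu ((1 / 2) ^ (j + 1)) + ωf ((1 / 2) ^ (j + 1)))) ∧
        Tendsto (fun r : ℝ => ⨆ x₀ ∈ ball (0 : E) (1 / 2), holderSemi σ (ball x₀ r) u)
          (𝓝[>] 0) (𝓝 0) := by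
  obtain ⟨C, hC, hle⟩ := exists_forall_dyadicSum_le μ hσ hlam hLam hωa
  refine ⟨2 ^ σ * C, by positivity, fun {A a f u ωf ωu γ} H hωf hωu ⟨M, hM⟩ hu hσγ hHol =>
    ⟨?_, tendsto_iSup_holderSemi_ball hσγ one_half_lt_one hHol⟩⟩
  have hγ := hσ.1.trans hσγ
  have hfin : eSupNorm univ u ≠ ⊤ :=
    ((eSupNorm_le fun x _ => hM x).trans_lt ENNReal.ofReal_lt_top).ne
  have hsup (x : E) : |u x| ≤ (eSupNorm univ u).toReal := abs_le_toReal_eSupNorm hfin (mem_univ x)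
  have hsum {ρ : ℝ} (hρ : ρ < 1) := summable_holderQuotient hγ.le hσγ hHol hρ
  calc holderSemi σ (ball 0 (1 / 2)) u
      ≤ ENNReal.ofReal (2 ^ σ * dyadicSum σ u (1 / 2)) :=
        holderSemi_le_ofReal_dyadicSum hσ.1 hsup (hsum one_half_lt_one) le_rfl
    _ ≤ ENNReal.ofReal (2 ^ σ * C * ((eSupNorm univ u).toReal +
          (∑' k : ℕ, ωu ((1 / 2) ^ (k + 1)) + ∑' k : ℕ, ωf ((1 / 2) ^ (k + 1))))) := by
      rw [mul_assoc (2 ^ σ), ← add_assoc]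
      gcongr
      exact hle H hωf hωu (continuousOn_of_holderSemi_lt_top hγ hHol) hsup
        (fun r hr x h hh => hωu.abs_fwdDiff_le hu hr x hh) (hsum (by norm_num))
    _ = _ := by
      rw [ENNReal.ofReal_mul (by positivity), ENNReal.ofReal_add ENNReal.toReal_nonneg
        (add_nonneg hωu.tsum_half_pow_nonneg hωf.tsum_half_pow_nonneg), mul_add,
        ENNReal.ofReal_toReal hfin, hωu.tsum_ofReal_add hωf]

end MainTheorem

/-- Dini estimate for concave fully nonlinear nonlocal elliptic equations, `σ ∈ (0,1)`. -/
theorem dini_estimate_order_lt_one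
    (d : ℕ) (hd : 1 ≤ d) (σ lam Lam : ℝ)
    (hσ : σ ∈ Set.Ioo (0:ℝ) 1) (hlam : 0 < lam) (hlamLam : lam ≤ Lam)
    (ωa : ℝ → ℝ) (hωa : IsDini ωa) :
    ∃ C : ℝ, 0 < C ∧
      ∀ (A : Type) [Nonempty A]
        (a : A → EuclideanSpace ℝ (Fin d) → EuclideanSpace ℝ (Fin d) → ℝ)
        (f : A → EuclideanSpace ℝ (Fin d) → ℝ)
        (u : EuclideanSpace ℝ (Fin d) → ℝ) (ωf ωu : ℝ → ℝ) (ε : ℝ),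
        -- (a) ellipticity, measurability in `y`, Dini continuity of the coefficients
        (∀ β x y, a β x y ∈ Set.Icc lam Lam) →
        (∀ β x, Measurable (a β x)) →
        (∀ β x x' y, x ≠ x' → |a β x y - a β x' y| ≤ Lam * ωa ‖x - x'‖) →
        -- (b) Dini continuity and boundedness of the data
        IsDini ωf →
        (∀ β, ∀ x ∈ ball (0:EuclideanSpace ℝ (Fin d)) 1,
          ∀ x' ∈ ball (0:EuclideanSpace ℝ (Fin d)) 1,
          x ≠ x' → |f β x - f β x'| ≤ ωf ‖x - x'‖) →
        (⨆ β, eSupNorm (ball (0:EuclideanSpace ℝ (Fin d)) 1) (f β)) < ⊤ →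
        -- (c) regularity of `u`
        (∃ M : ℝ, ∀ x, |u x| ≤ M) →
        IsDini ωu →
        (∀ x x' : EuclideanSpace ℝ (Fin d), x ≠ x' → |u x - u x'| ≤ ωu ‖x - x'‖) →
        ε ∈ Set.Ioo (0:ℝ) (1 - σ) →
        holderSemi (σ + ε) (ball (0:EuclideanSpace ℝ (Fin d)) 1) u < ⊤ →
        -- absolute integrability of the integrand of `L_β u`
        (∀ β, ∀ x ∈ ball (0:EuclideanSpace ℝ (Fin d)) 1,
          Integrable (fun y => (u (x + y) - u x) * a β x y * ‖y‖ ^ (-(d:ℝ) - σ))) →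
        -- (d) `u` solves `inf_β (L_β u + f_β) = 0` in `B_1`
        (∀ x ∈ ball (0:EuclideanSpace ℝ (Fin d)) 1,
          IsGLB {v : ℝ | ∃ β, v =
            (∫ y, (u (x + y) - u x) * a β x y * ‖y‖ ^ (-(d:ℝ) - σ)) + f β x} 0) →
        -- conclusion
        (holderSemi σ (ball (0:EuclideanSpace ℝ (Fin d)) (1/2)) u ≤
            ENNReal.ofReal C * eSupNorm (Set.univ) u
            + ENNReal.ofReal C * (⨆ β, eSupNorm (ball (0:EuclideanSpace ℝ (Fin d)) 1) (f β))
            + ENNReal.ofReal C *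
              ∑' j : ℕ, ENNReal.ofReal
                (ωu (2 ^ (-((j:ℝ) + 1))) + ωf (2 ^ (-((j:ℝ) + 1)))) ) ∧
          Tendsto (fun r : ℝ => ⨆ x0 ∈ ball (0:EuclideanSpace ℝ (Fin d)) (1/2),
              holderSemi σ (ball x0 r) u)
            (𝓝[>] (0:ℝ)) (𝓝 (0:ℝ≥0∞)) := by
  have : Nonempty (Fin d) := ⟨⟨0, hd⟩⟩
  obtain ⟨C, hC, hgeneral⟩ := dini_estimate_order_lt_one_general
    (volume : Measure (EuclideanSpace ℝ (Fin d))) hσ hlam (hlam.le.trans hlamLam) hωa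
  refine ⟨C, hC, fun A _ a f u ωf ωu ε ha ham haω hωf hfω _ hM hωu huω hε hHol hint hglb => ?_⟩
  have hkernel (y : EuclideanSpace ℝ (Fin d)) : ‖y‖ ^ (-(d : ℝ) - σ) = fracKernel σ y := by
    rw [fracKernel, finrank_euclideanSpace_fin]
  simp only [hkernel] at hint hglb
  obtain ⟨hle, hlim⟩ := hgeneral ⟨ha, ham, haω, hfω, hint, hglb⟩ hωf hωu hM huω
    (lt_add_of_pos_right σ hε.1) hHol
  simp only [two_rpow_neg_natCast_add_one]
  exact ⟨hle.trans (by gcongr; exact le_self_add), hlim⟩
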